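/- Let N ≥ 2 and 1 < λ < λ_s, where λ_s := (N+2)/(N−2) if N > 2 and λ_s := ∞ if N = 2, and let Ω be an arbitrary domain in ℝ^N with Ω ≠ ℝ^N. Then for any nonnegative integer s there exists a constant C = C(N, λ, s) > 0, independent of Ω and u, such that every nonnegative smooth solution u of −Δu = u^λ on Ω satisfies Σ_{r=0}^{s} |∇^r u(x)|^{(λ−1)/((λ−1)r + 2)} ≤ C · dist(x, ∂Ω)^{−1} for all x ∈ Ω. -/

import Mathlib

open MeasureTheory Metric

/-- The Laplacian of `u : ℝ^N → ℝ`, as the trace of the second derivative: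
`Δu(x) = ∑ i, ∂²u/∂x_i²(x)`. -/
noncomputable def laplacian {N : ℕ} (u : EuclideanSpace ℝ (Fin N) → ℝ)
    (x : EuclideanSpace ℝ (Fin N)) : ℝ :=
  ∑ i : Fin N,
    iteratedFDeriv ℝ 2 u x ![EuclideanSpace.single i (1 : ℝ), EuclideanSpace.single i (1 : ℝ)]

/-!
For `u > 0` put `w = log u`; then `Δw = -u ^ (p - 1) - ‖∇w‖ ^ 2`. The Bochner identity, applied at
an interior maximum of `u ^ γ * (‖∇w‖ ^ 2 + d * u ^ (p - 1))` multiplied by a cutoff, bounds this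
quantity at the centre of a unit ball in the domain: the error terms are absorbed as soon as `γ < 0`
and `d > 0` make a quadratic form in `‖∇w‖ ^ 2` and `u ^ (p - 1)` positive on the quadrant, which is
possible in the subcritical range. To avoid dividing by
zero, `u` is replaced by `u + δ` in `w`. On a ball of fixed radius this gives an upper bound for `u`
and a gradient bound `‖∇u‖ ≤ M u`, that is, a Harnack inequality. After division by its value at the
centre, `u` therefore stays in a compact subset of `(0, ∞)`, where `t ↦ t ^ p` is smooth, and the
interior estimates for the Laplacian bound all derivatives inductively. The scaling
`u ↦ ρ ^ (2 / (p - 1)) * u (x + ρ •)` transports the estimate to a general domain.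
-/

open Set Filter Topology
open scoped Gradient Laplacian RealInnerProductSpace ContDiff

section Calculus

variable {E F F' : Type*} [NormedAddCommGroup E] [InnerProductSpace ℝ E] [FiniteDimensional ℝ E]
  [NormedAddCommGroup F] [NormedSpace ℝ F] [NormedAddCommGroup F'] [InnerProductSpace ℝ F']
  {ι : Type*} [Fintype ι] {x : E}

theorem laplacian_eq_sum_fderiv_fderiv (b : OrthonormalBasis ι ℝ E) (f : E → F) (x : E) :
    Δ f x = ∑ i, fderiv ℝ (fderiv ℝ f) x (b i) (b i) := by
  simp only [InnerProductSpace.laplacian_eq_iteratedFDeriv_orthonormalBasis f b,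
    iteratedFDeriv_two_apply, Matrix.cons_val_zero, Matrix.cons_val_one]

theorem sum_apply_sq_eq_norm_gradient_sq (b : OrthonormalBasis ι ℝ E) (f : E → ℝ) (x : E) :
    ∑ i, fderiv ℝ f x (b i) ^ 2 = ‖∇ f x‖ ^ 2 := by
  simp only [← b.sum_sq_norm_inner_left (∇ f x), inner_gradient_left, Real.norm_eq_abs, sq_abs]

theorem laplacian_fderiv {f : E → F} (hf : ContDiffAt ℝ 3 f x) :
    Δ (fderiv ℝ f) x = fderiv ℝ (Δ f) x := by
  set b := stdOrthonormalBasis ℝ E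
  have hD : ContDiffAt ℝ 2 (fderiv ℝ f) x := hf.fderiv_right (by norm_num)
  have hD2 : HasFDerivAt (fderiv ℝ (fderiv ℝ f)) (fderiv ℝ (fderiv ℝ (fderiv ℝ f)) x) x :=
    ((hD.fderiv_right (m := 1) (by norm_num)).differentiableAt one_ne_zero).hasFDerivAt
  have happly (v w : E) : HasFDerivAt (fun y => fderiv ℝ (fderiv ℝ f) y v w)
      (((fderiv ℝ (fderiv ℝ (fderiv ℝ f)) x).flip v).flip w) x :=
    (hD2.clm_apply (hasFDerivAt_const v x)).clm_apply (hasFDerivAt_const w x) |>.congr_fderiv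
      (by ext; simp)
  have hsymm_right (a v w : E) : fderiv ℝ (fderiv ℝ (fderiv ℝ f)) x a v w =
      fderiv ℝ (fderiv ℝ (fderiv ℝ f)) x a w v := by
    have hcongr : (fun y => fderiv ℝ (fderiv ℝ f) y v w) =ᶠ[𝓝 x]
        fun y => fderiv ℝ (fderiv ℝ f) y w v := by
      filter_upwards [hf.eventually (by simp)] with y hy
      exact hy.isSymmSndFDerivAt (by norm_num) v w
    exact congr($((happly v w).unique ((happly w v).congr_of_eventuallyEq hcongr)) a)
  have hsymm_left : IsSymmSndFDerivAt ℝ (fderiv ℝ f) x := hD.isSymmSndFDerivAt (by simp)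
  have hlap : HasFDerivAt (Δ f)
      (∑ i, ((fderiv ℝ (fderiv ℝ (fderiv ℝ f)) x).flip (b i)).flip (b i)) x := by
    rw [funext (laplacian_eq_sum_fderiv_fderiv b f)]
    exact HasFDerivAt.fun_sum fun i _ => happly (b i) (b i)
  ext v
  simp only [hlap.fderiv, laplacian_eq_sum_fderiv_fderiv b, sum_apply,
    ContinuousLinearMap.flip_apply]
  refine Finset.sum_congr rfl fun i _ => ?_
  rw [hsymm_right, hsymm_left]

theorem laplacian_linearIsometryEquiv_comp {G : Type*} [NormedAddCommGroup G] [NormedSpace ℝ G]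
    (L : F ≃ₗᵢ[ℝ] G) (f : E → F) (x : E) : Δ (L ∘ f) x = L (Δ f x) :=
  congrFun (InnerProductSpace.laplacian_CLE_comp_left (l := L.toContinuousLinearEquiv)) x

theorem laplacian_gradient {f : E → ℝ} (hf : ContDiffAt ℝ 3 f x) :
    Δ (∇ f) x = ∇ (Δ f) x :=
  (laplacian_linearIsometryEquiv_comp (InnerProductSpace.toDual ℝ E).symm (fderiv ℝ f) x).trans
    congr((InnerProductSpace.toDual ℝ E).symm $(laplacian_fderiv hf))

theorem laplacian_iteratedFDeriv {f : E → F} {k : ℕ} (hf : ContDiffAt ℝ (k + 2 : ℕ) f x) :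
    Δ (iteratedFDeriv ℝ k f) x = iteratedFDeriv ℝ k (Δ f) x := by
  induction k generalizing x with
  | zero =>
    simp only [iteratedFDeriv_zero_eq_comp]
    exact congrFun (InnerProductSpace.laplacian_CLE_comp_left
      (l := (continuousMultilinearCurryFin0 ℝ E F).symm.toContinuousLinearEquiv)) x
  | succ k ih =>
    obtain ⟨curry, hcurry⟩ : ∃ L : (E →L[ℝ] E [×k]→L[ℝ] F) ≃ₗᵢ[ℝ] (E [×(k + 1)]→L[ℝ] F),
        ∀ g : E → F, iteratedFDeriv ℝ (k + 1) g = L ∘ fderiv ℝ (iteratedFDeriv ℝ k g) :=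
      ⟨_, fun _ => iteratedFDeriv_succ_eq_comp_left⟩
    have hcongr : Δ (iteratedFDeriv ℝ k f) =ᶠ[𝓝 x] iteratedFDeriv ℝ k (Δ f) := by
      filter_upwards [hf.eventually (WithTop.coe_injective.ne (ENat.natCast_ne_top _))] with y hy
      exact ih (hy.of_le (by norm_cast; lia))
    have hD : ContDiffAt ℝ 3 (iteratedFDeriv ℝ k f) x :=
      hf.iteratedFDeriv_right (by norm_cast; lia)
    have hcomp := laplacian_linearIsometryEquiv_comp (F := E →L[ℝ] E [×k]→L[ℝ] F)
      (G := E [×(k + 1)]→L[ℝ] F) curry (fderiv ℝ (iteratedFDeriv ℝ k f)) x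
    calc Δ (iteratedFDeriv ℝ (k + 1) f) x
        = curry (Δ (fderiv ℝ (iteratedFDeriv ℝ k f)) x) := by rw [hcurry, hcomp]
      _ = iteratedFDeriv ℝ (k + 1) (Δ f) x := by
          rw [laplacian_fderiv hD, hcongr.fderiv_eq, hcurry, Function.comp_apply]

theorem laplacian_comp {f : E → ℝ} {φ φ' : ℝ → ℝ} {φ'' : ℝ} (hf : ContDiffAt ℝ 2 f x)
    (hφ : ∀ᶠ t in 𝓝 (f x), HasDerivAt φ (φ' t) t) (hφ' : HasDerivAt φ' φ'' (f x)) :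
    Δ (fun y => φ (f y)) x = φ' (f x) * Δ f x + φ'' * ‖∇ f x‖ ^ 2 := by
  set b := stdOrthonormalBasis ℝ E
  have hf1 : HasFDerivAt f (fderiv ℝ f x) x := (hf.differentiableAt two_ne_zero).hasFDerivAt
  have hf2 : HasFDerivAt (fderiv ℝ f) (fderiv ℝ (fderiv ℝ f) x) x :=
    ((hf.fderiv_right (m := 1) (by norm_num)).differentiableAt one_ne_zero).hasFDerivAt
  have hfirst : fderiv ℝ (fun y => φ (f y)) =ᶠ[𝓝 x] fun y => φ' (f y) • fderiv ℝ f y := by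
    filter_upwards [hf.continuousAt.eventually hφ, hf.eventually (by simp)] with y hy hfy
    exact (hy.comp_hasFDerivAt y (hfy.differentiableAt two_ne_zero).hasFDerivAt).fderiv
  have hsecond := hfirst.fderiv_eq.trans
    ((hφ'.comp_hasFDerivAt x hf1).smul hf2).fderiv
  simp only [laplacian_eq_sum_fderiv_fderiv b, hsecond, ← sum_apply_sq_eq_norm_gradient_sq b,
    Finset.mul_sum, ← Finset.sum_add_distrib]
  refine Finset.sum_congr rfl fun i _ => ?_
  simp only [Function.comp_apply, add_apply, smul_apply,
    ContinuousLinearMap.smulRight_apply, smul_eq_mul]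
  ring

theorem laplacian_norm_sq {V : E → F'} (b : OrthonormalBasis ι ℝ E) (hV : ContDiffAt ℝ 2 V x) :
    Δ (fun y => ‖V y‖ ^ 2) x =
      2 * ⟪V x, Δ V x⟫ + 2 * ∑ i, ‖fderiv ℝ V x (b i)‖ ^ 2 := by
  have hV1 : HasFDerivAt V (fderiv ℝ V x) x := (hV.differentiableAt two_ne_zero).hasFDerivAt
  have hV2 : HasFDerivAt (fderiv ℝ V) (fderiv ℝ (fderiv ℝ V) x) x :=
    ((hV.fderiv_right (m := 1) (by norm_num)).differentiableAt one_ne_zero).hasFDerivAt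
  have hfirst : fderiv ℝ (fun y => ‖V y‖ ^ 2) =ᶠ[𝓝 x]
      fun y => 2 • (innerSL ℝ (V y)).comp (fderiv ℝ V y) := by
    filter_upwards [hV.eventually (by simp)] with y hy
    exact (hy.differentiableAt two_ne_zero).hasFDerivAt.norm_sq.fderiv
  have hsecond := hfirst.fderiv_eq.trans
    ((((innerSL ℝ).hasFDerivAt.comp x hV1).clm_comp hV2).const_smul 2).fderiv
  simp only [laplacian_eq_sum_fderiv_fderiv b, hsecond, inner_sum, Finset.mul_sum,
    ← Finset.sum_add_distrib]
  refine Finset.sum_congr rfl fun i _ => ?_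
  rw [← real_inner_self_eq_norm_sq]
  change (2 : ℕ) • (⟪V x, fderiv ℝ (fderiv ℝ V) x (b i) (b i)⟫ +
    ⟪fderiv ℝ V x (b i), fderiv ℝ V x (b i)⟫) = _
  rw [nsmul_eq_mul, Nat.cast_two]
  ring

theorem laplacian_comp_add_smul_linearIsometryEquiv {f : E → F} (L : E ≃ₗᵢ[ℝ] E) (c : E) (ρ : ℝ)
    {y : E} (hf : ContDiffAt ℝ 2 f (c + ρ • L y)) :
    Δ (fun z => f (c + ρ • L z)) y = ρ ^ 2 • Δ f (c + ρ • L y) := by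
  set b := stdOrthonormalBasis ℝ E
  let A : E →L[ℝ] E := ρ • (L : E →L[ℝ] E)
  have hA (z : E) : HasFDerivAt (fun z => c + ρ • L z) A z := A.hasFDerivAt.const_add c
  have hfirst : fderiv ℝ (fun z => f (c + ρ • L z)) =ᶠ[𝓝 y]
      fun z => (fderiv ℝ f (c + ρ • L z)).comp A := by
    filter_upwards [(hA y).continuousAt.eventually (hf.eventually (by simp))] with z hz
    exact ((hz.differentiableAt two_ne_zero).hasFDerivAt.comp z (hA z)).fderiv
  have hf' : HasFDerivAt (fderiv ℝ f) (fderiv ℝ (fderiv ℝ f) (c + ρ • L y)) (c + ρ • L y) :=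
    ((hf.fderiv_right (m := 1) (by norm_num)).differentiableAt one_ne_zero).hasFDerivAt
  have hsecond := hfirst.fderiv_eq.trans
    ((hf'.comp y (hA y)).clm_comp (hasFDerivAt_const A y)).fderiv
  rw [laplacian_eq_sum_fderiv_fderiv b, laplacian_eq_sum_fderiv_fderiv (b.map L), hsecond,
    Finset.smul_sum]
  refine Finset.sum_congr rfl fun i _ => ?_
  simp [A, smul_smul, sq]

theorem laplacian_norm_sub_sq (c x : E) :
    Δ (fun y => ‖y - c‖ ^ 2) x = 2 * Module.finrank ℝ E := by
  have hD : fderiv ℝ (fun y : E => y - c) = fun _ => ContinuousLinearMap.id ℝ E :=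
    funext fun y => ((hasFDerivAt_id y).sub_const c).fderiv
  rw [laplacian_norm_sq (stdOrthonormalBasis ℝ E) (by fun_prop),
    laplacian_eq_sum_fderiv_fderiv (stdOrthonormalBasis ℝ E)]
  simp [hD]

theorem laplacian_inner_left (e x : E) : Δ (fun y => ⟪e, y⟫) x = 0 := by
  have hD : fderiv ℝ (fun y : E => ⟪e, y⟫) = fun _ => innerSL ℝ e :=
    funext fun y => (innerSL ℝ e).fderiv
  simp [laplacian_eq_sum_fderiv_fderiv (stdOrthonormalBasis ℝ E), hD]

end Calculus

section MaximumPrinciple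

theorem fderiv_fderiv_apply_nonpos_of_isLocalMax {E : Type*} [NormedAddCommGroup E]
    [NormedSpace ℝ E] {f : E → ℝ} {x : E} (hf : ContDiffAt ℝ 2 f x) (hmax : IsLocalMax f x)
    (v : E) : fderiv ℝ (fderiv ℝ f) x v v ≤ 0 := by
  let φ : ℝ → ℝ := fun t => f (x + t • v)
  have hline (t : ℝ) : HasDerivAt (fun t : ℝ => x + t • v) v t := by
    simpa using ((hasDerivAt_id t).smul_const v).const_add x
  have hline_tendsto : Tendsto (fun t : ℝ => x + t • v) (𝓝 0) (𝓝 x) := by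
    simpa using (hline 0).continuousAt.tendsto
  have hφ' : deriv φ =ᶠ[𝓝 0] fun t => fderiv ℝ f (x + t • v) v := by
    filter_upwards [hline_tendsto.eventually (hf.eventually (by simp))] with t ht
    exact ((ht.differentiableAt two_ne_zero).hasFDerivAt.comp_hasDerivAt t (hline t)).deriv
  have hφ'' : deriv (deriv φ) 0 = fderiv ℝ (fderiv ℝ f) x v v := by
    have hf' : HasFDerivAt (fun y => fderiv ℝ f y v) ((fderiv ℝ (fderiv ℝ f) x).flip v) x :=
      (((hf.fderiv_right (m := 1) (by norm_num)).differentiableAt one_ne_zero).hasFDerivAt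
        |>.clm_apply (hasFDerivAt_const v x)).congr_fderiv (by ext; simp)
    exact hφ'.deriv_eq.trans (hf'.comp_hasDerivAt_of_eq 0 (hline 0) (by simp)).deriv
  have hφmax : IsLocalMax φ 0 := by
    simpa [φ, IsLocalMax, IsMaxFilter] using hline_tendsto.eventually hmax
  rw [← hφ'']
  by_contra! hpos
  have hφmin : IsLocalMin φ 0 :=
    isLocalMin_of_deriv_deriv_pos hpos hφmax.deriv_eq_zero
      (hf.continuousAt.comp_of_eq (hline 0).continuousAt (by simp))
  have hφconst : φ =ᶠ[𝓝 0] fun _ => φ 0 := by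
    filter_upwards [hφmax, hφmin] with t h₁ h₂ using le_antisymm h₁ h₂
  simp [hφconst.deriv.deriv_eq] at hpos

variable {E : Type*} [NormedAddCommGroup E] [InnerProductSpace ℝ E] [FiniteDimensional ℝ E]

theorem laplacian_nonpos_of_isLocalMax {f : E → ℝ} {x : E} (hf : ContDiffAt ℝ 2 f x)
    (hmax : IsLocalMax f x) : Δ f x ≤ 0 := by
  rw [laplacian_eq_sum_fderiv_fderiv (stdOrthonormalBasis ℝ E)]
  exact Finset.sum_nonpos fun i _ => fderiv_fderiv_apply_nonpos_of_isLocalMax hf hmax _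

theorem le_of_laplacian_pos {K : Set E} (hK : IsCompact K) {f : E → ℝ} {M : ℝ}
    (hcont : ContinuousOn f K) (hf : ∀ x ∈ interior K, ContDiffAt ℝ 2 f x)
    (hΔ : ∀ x ∈ interior K, 0 < Δ f x) (hM : ∀ x ∈ frontier K, f x ≤ M) :
    ∀ x ∈ K, f x ≤ M := by
  intro x hx
  obtain ⟨y, hyK, hy⟩ := hK.exists_isMaxOn ⟨x, hx⟩ hcont
  refine (hy hx).trans (hM y ⟨subset_closure hyK, fun hyint => ?_⟩)
  have hmax : IsLocalMax f y := hy.isLocalMax (mem_interior_iff_mem_nhds.1 hyint)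
  exact (laplacian_nonpos_of_isLocalMax (hf y hyint) hmax).not_gt (hΔ y hyint)

end MaximumPrinciple

section GradientEstimate

variable {E F : Type*} [NormedAddCommGroup E] [InnerProductSpace ℝ E]
  [NormedAddCommGroup F] [NormedSpace ℝ F]

/-- The comparison function of the reflection argument in the unit half ball `0 ≤ ⟪e, y⟫`: it
vanishes at the origin, is at least `1` on the unit sphere, and has Laplacian `-2`. -/
noncomputable def halfBallBarrier (e y : E) : ℝ :=
  ‖y‖ ^ 2 + (Module.finrank ℝ E + 1) * (⟪e, y⟫ - ⟪e, y⟫ ^ 2)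

theorem contDiff_halfBallBarrier (e : E) {n : ℕ∞ω} : ContDiff ℝ n (halfBallBarrier e) := by
  have hinner : ContDiff ℝ n fun y : E => ⟪e, y⟫ := (innerSL ℝ e).contDiff
  exact (contDiff_norm_sq ℝ).add (contDiff_const.mul (hinner.sub (hinner.pow 2)))

theorem hasFDerivAt_halfBallBarrier_zero (e : E) :
    HasFDerivAt (halfBallBarrier e) (((Module.finrank ℝ E : ℝ) + 1) • innerSL ℝ e) 0 := by
  have hinner : HasFDerivAt (fun y : E => ⟪e, y⟫) (innerSL ℝ e) 0 := (innerSL ℝ e).hasFDerivAt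
  exact (((hasFDerivAt_id (0 : E)).norm_sq).add
    ((hinner.sub (hinner.pow 2)).const_mul ((Module.finrank ℝ E : ℝ) + 1))).congr_fderiv
      (by ext; simp)

theorem one_le_halfBallBarrier {e y : E} (he : ‖e‖ = 1) (hy : ‖y‖ = 1) (hey : 0 ≤ ⟪e, y⟫) :
    1 ≤ halfBallBarrier e y := by
  have hle : ⟪e, y⟫ ≤ 1 := by simpa [he, hy] using real_inner_le_norm e y
  have : 0 ≤ ⟪e, y⟫ - ⟪e, y⟫ ^ 2 := by nlinarith
  simp only [halfBallBarrier, hy]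
  have := mul_nonneg (by positivity : (0 : ℝ) ≤ Module.finrank ℝ E + 1) this
  linarith

/-- The closed unit half ball `{‖y‖ ≤ 1, 0 ≤ ⟪e, y⟫}` on which a function and its reflection are
compared. -/
def closedHalfBall (e : E) : Set E := closedBall 0 1 ∩ {y | 0 ≤ ⟪e, y⟫}

theorem mem_posTangentConeAt_closedHalfBall {e : E} (he : ‖e‖ = 1) :
    e ∈ posTangentConeAt (closedHalfBall e) 0 := by
  refine mem_posTangentConeAt_of_segment_subset ?_
  rw [zero_add]
  refine ((convex_closedBall 0 1).inter ?_).segment_subset ?_ ?_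
  · exact convex_halfSpace_ge (innerSL ℝ e).toLinearMap.isLinear 0
  · simp
  · simp [he]

variable [FiniteDimensional ℝ E]

theorem isCompact_closedHalfBall (e : E) : IsCompact (closedHalfBall e) :=
  (isCompact_closedBall 0 1).inter_right (isClosed_le continuous_const (by fun_prop))

theorem frontier_closedHalfBall_subset (e : E) :
    frontier (closedHalfBall e) ⊆ closedHalfBall e ∩ {y | ‖y‖ = 1 ∨ ⟪e, y⟫ = 0} := by
  intro y hy
  refine ⟨(isCompact_closedHalfBall e).isClosed.frontier_subset hy, ?_⟩
  rcases frontier_inter_subset _ _ hy with ⟨h, -⟩ | ⟨-, h⟩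
  · exact .inl (by simpa using frontier_closedBall_subset_sphere h)
  · exact .inr (frontier_le_subset_eq continuous_const (by fun_prop) h).symm

theorem laplacian_halfBallBarrier {e : E} (he : ‖e‖ = 1) (x : E) :
    Δ (halfBallBarrier e) x = -2 := by
  set K : ℝ := Module.finrank ℝ E + 1 with hK
  have hinner : ContDiff ℝ 2 fun y : E => ⟪e, y⟫ := (innerSL ℝ e).contDiff
  have hgrad : ∇ (fun y => ⟪e, y⟫) x = e :=
    (hasGradientAt_iff_hasFDerivAt.2 (innerSL ℝ e).hasFDerivAt).gradient
  have hφ (t : ℝ) : HasDerivAt (fun t => K * (t - t ^ 2)) (K * (1 - 2 * t)) t := by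
    simpa using ((hasDerivAt_id t).sub (hasDerivAt_pow 2 t)).const_mul K
  have hφ' (t : ℝ) : HasDerivAt (fun t => K * (1 - 2 * t)) (K * (-2)) t := by
    simpa using (((hasDerivAt_id t).const_mul 2).const_sub 1).const_mul K
  have hbarrier : halfBallBarrier e =
      (fun y : E => ‖y - 0‖ ^ 2) + fun y => K * (⟪e, y⟫ - ⟪e, y⟫ ^ 2) := by
    ext y
    simp [halfBallBarrier, hK]
  rw [hbarrier, ContDiffAt.laplacian_add (by simpa using (contDiff_norm_sq ℝ).contDiffAt)
      (contDiff_const.mul (hinner.sub (hinner.pow 2))).contDiffAt, laplacian_norm_sub_sq,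
    laplacian_comp hinner.contDiffAt (.of_forall hφ) (hφ' _), laplacian_inner_left, hgrad, he, hK]
  ring

theorem fderiv_zero_apply_le_of_closedHalfBall {g : E → ℝ} {e : E} {A : ℝ} (he : ‖e‖ = 1)
    (hA : 0 < A) (hg : ∀ y ∈ closedHalfBall e, ContDiffAt ℝ 2 g y)
    (hg_le : ∀ y ∈ closedHalfBall e, g y ≤ A)
    (hg_eq : ∀ y ∈ closedHalfBall e, ⟪e, y⟫ = 0 → g y = 0)
    (hΔ : ∀ y ∈ closedHalfBall e, -A ≤ Δ g y) :
    fderiv ℝ g 0 e ≤ (Module.finrank ℝ E + 1) * A := by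
  have hzero : (0 : E) ∈ closedHalfBall e := by simp [closedHalfBall]
  have hbarrier (y : E) : ContDiffAt ℝ 2 (A • halfBallBarrier e) y :=
    (contDiff_halfBallBarrier e).contDiffAt.const_smul A
  have hΔ_pos (y : E) (hy : y ∈ interior (closedHalfBall e)) :
      0 < Δ (g - A • halfBallBarrier e) y := by
    rw [(hg y (interior_subset hy)).laplacian_sub (hbarrier y),
      InnerProductSpace.laplacian_smul _ (contDiff_halfBallBarrier e).contDiffAt,
      laplacian_halfBallBarrier he, smul_eq_mul]
    linarith [hΔ y (interior_subset hy)]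
  have hfrontier (y : E) (hy : y ∈ frontier (closedHalfBall e)) :
      (g - A • halfBallBarrier e) y ≤ 0 := by
    obtain ⟨hmem, hnorm | hplane⟩ := frontier_closedHalfBall_subset e hy
    · have := mul_le_mul_of_nonneg_left (one_le_halfBallBarrier he hnorm hmem.2) hA.le
      simpa using (hg_le y hmem).trans (by linarith)
    · simpa [hg_eq y hmem hplane, halfBallBarrier, hplane] using by positivity
  have hmax : IsMaxOn (g - A • halfBallBarrier e) (closedHalfBall e) 0 := fun y hy => by
    have := le_of_laplacian_pos (isCompact_closedHalfBall e)
      (fun z hz => ((hg z hz).sub (hbarrier z)).continuousAt.continuousWithinAt)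
      (fun z hz => (hg z (interior_subset hz)).sub (hbarrier z)) hΔ_pos hfrontier y hy
    simpa [hg_eq 0 hzero (inner_zero_right e), halfBallBarrier] using this
  have hderiv := ((hg 0 hzero).differentiableAt two_ne_zero).hasFDerivAt.sub
    ((hasFDerivAt_halfBallBarrier_zero e).const_smul A)
  simpa [he, mul_comm A] using hmax.localize.hasFDerivWithinAt_nonpos hderiv.hasFDerivWithinAt
    (mem_posTangentConeAt_closedHalfBall he)

theorem fderiv_apply_le_of_abs_laplacian_le {h : E → ℝ} {x e : E} {A : ℝ} (he : ‖e‖ = 1)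
    (hA : 0 < A) (hh : ∀ y ∈ closedBall x 1, ContDiffAt ℝ 2 h y)
    (h_le : ∀ y ∈ closedBall x 1, |h y| ≤ A) (hΔ : ∀ y ∈ closedBall x 1, |Δ h y| ≤ A) :
    fderiv ℝ h x e ≤ (Module.finrank ℝ E + 1) * A := by
  let R : E ≃ₗᵢ[ℝ] E := (ℝ ∙ e)ᗮ.reflection
  let pullback (L : E ≃ₗᵢ[ℝ] E) (y : E) : ℝ := h (x + (1 : ℝ) • L y)
  have hmem (L : E ≃ₗᵢ[ℝ] E) {y : E} (hy : y ∈ closedHalfBall e) :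
      x + (1 : ℝ) • L y ∈ closedBall x 1 := by simpa using hy.1
  have hsmooth (L : E ≃ₗᵢ[ℝ] E) {y : E} (hy : y ∈ closedHalfBall e) :
      ContDiffAt ℝ 2 (pullback L) y :=
    (hh _ (hmem L hy)).comp y (contDiff_const.add (L.contDiff.const_smul 1)).contDiffAt
  have hderiv (L : E ≃ₗᵢ[ℝ] E) : HasFDerivAt (pullback L) (fderiv ℝ h x ∘L (L : E →L[ℝ] E)) 0 := by
    have hL : HasFDerivAt (fun y => x + (1 : ℝ) • L y) (L : E →L[ℝ] E) 0 := by
      simpa using (L : E →L[ℝ] E).hasFDerivAt.const_add x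
    have hx : x + (1 : ℝ) • L 0 = x := by simp
    refine HasFDerivAt.comp (g := h) 0 ?_ hL
    rw [hx]
    exact ((hh x (by simp)).differentiableAt two_ne_zero).hasFDerivAt
  have key := fderiv_zero_apply_le_of_closedHalfBall (g := pullback (.refl ℝ E) - pullback R)
    (A := 2 * A) he (by positivity) (fun y hy => (hsmooth _ hy).sub (hsmooth _ hy))
    (fun y hy => ?_) (fun y _ hplane => ?_) (fun y hy => ?_)
  · have hRe : R e = -e := Submodule.reflection_orthogonalComplement_singleton_eq_neg e
    rw [((hderiv (.refl ℝ E)).sub (hderiv R)).fderiv] at key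
    have hkey : fderiv ℝ h x e + fderiv ℝ h x e ≤ (Module.finrank ℝ E + 1) * (2 * A) := by
      simpa [hRe] using key
    linarith
  · have := abs_le.1 (h_le _ (hmem (.refl ℝ E) hy))
    have := abs_le.1 (h_le _ (hmem R hy))
    simp only [Pi.sub_apply, pullback]
    linarith
  · have hRy : R y = y := Submodule.reflection_mem_subspace_eq_self
      (Submodule.mem_orthogonal_singleton_iff_inner_right.2 hplane)
    simp [pullback, hRy]
  · have hΔL (L : E ≃ₗᵢ[ℝ] E) : |Δ (pullback L) y| ≤ A := by
      rw [laplacian_comp_add_smul_linearIsometryEquiv L x 1 (hh _ (hmem L hy))]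
      simpa using hΔ _ (hmem L hy)
    rw [(hsmooth _ hy).laplacian_sub (hsmooth _ hy)]
    linarith [(abs_le.1 (hΔL (.refl ℝ E))).1, (abs_le.1 (hΔL R)).2]

theorem norm_fderiv_le_of_norm_laplacian_le {h : E → F} {x : E} {A : ℝ} (hA : 0 < A)
    (hh : ∀ y ∈ closedBall x 1, ContDiffAt ℝ 2 h y) (h_le : ∀ y ∈ closedBall x 1, ‖h y‖ ≤ A)
    (hΔ : ∀ y ∈ closedBall x 1, ‖Δ h y‖ ≤ A) :
    ‖fderiv ℝ h x‖ ≤ (Module.finrank ℝ E + 1) * A := by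
  refine ContinuousLinearMap.opNorm_le_of_unit_norm (by positivity) fun e he => ?_
  obtain ⟨g, hg, hge⟩ := exists_dual_vector'' ℝ (fderiv ℝ h x e)
  have hgle (z : F) (hz : ‖z‖ ≤ A) : |g z| ≤ A := by
    simpa using (g.le_of_opNorm_le hg z).trans (by simpa using hz)
  have key := fderiv_apply_le_of_abs_laplacian_le (h := g ∘ h) he hA
    (fun y hy => g.contDiff.contDiffAt.comp y (hh y hy)) (fun y hy => hgle _ (h_le y hy))
    (fun y hy => by simpa [(hh y hy).laplacian_CLM_comp_left] using hgle _ (hΔ y hy))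
  have hgh := (g.hasFDerivAt.comp x
    ((hh x (by simp)).differentiableAt two_ne_zero).hasFDerivAt).fderiv
  rw [hgh] at key
  calc ‖fderiv ℝ h x e‖ = g (fderiv ℝ h x e) := by simp [hge]
    _ ≤ _ := key

end GradientEstimate

section InteriorEstimates

variable {E F G : Type*} [NormedAddCommGroup E] [InnerProductSpace ℝ E]
  [NormedAddCommGroup F] [NormedSpace ℝ F] [NormedAddCommGroup G] [NormedSpace ℝ G]

theorem exists_norm_iteratedFDeriv_le_of_isCompact {f : F → G} {T K : Set F} (hT : IsOpen T)
    (hK : IsCompact K) (hKT : K ⊆ T) (hf : ContDiffOn ℝ ∞ f T) (r : ℕ) :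
    ∃ C, ∀ i ≤ r, ∀ t ∈ K, ‖iteratedFDeriv ℝ i f t‖ ≤ C := by
  have hbound (i : ℕ) : ∃ C, ∀ t ∈ K, ‖iteratedFDeriv ℝ i f t‖ ≤ C := by
    refine hK.exists_bound_of_continuousOn ?_
    have hcont : ContinuousOn (iteratedFDerivWithin ℝ i f T) T :=
      hf.continuousOn_iteratedFDerivWithin (mod_cast le_top) hT.uniqueDiffOn
    exact (hcont.congr (iteratedFDerivWithin_of_isOpen i hT).symm).mono hKT
  choose C hC using hbound
  obtain ⟨M, hM⟩ := ((Finset.range (r + 1)).image C).exists_le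
  exact ⟨M, fun i hi t ht => (hC i t ht).trans (hM _ (Finset.mem_image_of_mem C
    (Finset.mem_range_succ_iff.2 hi)))⟩

theorem norm_iteratedFDeriv_comp_le_of_isOpen {f : F → G} {U : E → F} {T : Set F} {O : Set E}
    (hT : IsOpen T) (hO : IsOpen O) (hf : ContDiffOn ℝ ∞ f T) (hU : ContDiffOn ℝ ∞ U O)
    (hUT : MapsTo U O T) {r : ℕ} {C D : ℝ} {y : E} (hy : y ∈ O)
    (hC : ∀ i ≤ r, ‖iteratedFDeriv ℝ i f (U y)‖ ≤ C)
    (hD : ∀ i ≤ r, 1 ≤ i → ‖iteratedFDeriv ℝ i U y‖ ≤ D ^ i) :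
    ‖iteratedFDeriv ℝ r (f ∘ U) y‖ ≤ r.factorial * C * D ^ r := by
  have hTi (i : ℕ) := iteratedFDerivWithin_of_isOpen (𝕜 := ℝ) (f := f) i hT (hUT hy)
  have hOi (i : ℕ) := iteratedFDerivWithin_of_isOpen (𝕜 := ℝ) (f := U) i hO hy
  rw [← iteratedFDerivWithin_of_isOpen r hO hy]
  exact norm_iteratedFDerivWithin_comp_le hf hU (mod_cast le_top) hT.uniqueDiffOn hO.uniqueDiffOn
    hUT hy (fun i hi => hTi i ▸ hC i hi) (fun i hi hir => hOi i ▸ hD i hir hi)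

variable [FiniteDimensional ℝ E]

theorem norm_laplacian_iteratedFDeriv_le_of_laplacian_eq {f : F → F} {U : E → F} {T : Set F}
    {O : Set E} (hT : IsOpen T) (hO : IsOpen O) (hf : ContDiffOn ℝ ∞ f T) (hU : ContDiffOn ℝ ∞ U O)
    (hUT : MapsTo U O T) {κ : ℝ} (hΔ : ∀ y ∈ O, Δ U y = κ • f (U y)) {r : ℕ} {C D : ℝ} {y : E}
    (hy : y ∈ O) (hC : ∀ i ≤ r, ‖iteratedFDeriv ℝ i f (U y)‖ ≤ C)
    (hD : ∀ i ≤ r, 1 ≤ i → ‖iteratedFDeriv ℝ i U y‖ ≤ D ^ i) :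
    ‖Δ (iteratedFDeriv ℝ r U) y‖ ≤ |κ| * (r.factorial * C * D ^ r) := by
  have hUy : Δ U =ᶠ[𝓝 y] κ • (f ∘ U) := by
    filter_upwards [hO.mem_nhds hy] with z hz using hΔ z hz
  have hfU : ContDiffAt ℝ ∞ (f ∘ U) y :=
    ((hf.comp hU hUT).contDiffAt (hO.mem_nhds hy))
  have hUr : ContDiffAt ℝ (r + 2 : ℕ) U y :=
    contDiffAt_infty.1 (hU.contDiffAt (hO.mem_nhds hy)) _
  rw [laplacian_iteratedFDeriv hUr, (hUy.iteratedFDeriv (𝕜 := ℝ) r).self_of_nhds,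
    iteratedFDeriv_const_smul_apply (hfU.of_le (mod_cast le_top)), norm_smul, Real.norm_eq_abs]
  gcongr
  exact norm_iteratedFDeriv_comp_le_of_isOpen hT hO hf hU hUT hy hC hD

theorem norm_iteratedFDeriv_succ_le_of_laplacian_eq {f : F → F} {U : E → F} {T : Set F} {O : Set E}
    (hT : IsOpen T) (hO : IsOpen O) (hf : ContDiffOn ℝ ∞ f T) (hU : ContDiffOn ℝ ∞ U O)
    (hUT : MapsTo U O T) {κ κ₀ : ℝ} (hκ : |κ| ≤ κ₀) (hΔ : ∀ y ∈ O, Δ U y = κ • f (U y)) {r : ℕ}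
    {C D : ℝ} (hD : 1 ≤ D) {y : E} (hy : closedBall y 1 ⊆ O)
    (hfC : ∀ z ∈ closedBall y 1, ∀ i ≤ r, ‖iteratedFDeriv ℝ i f (U z)‖ ≤ C)
    (hUD : ∀ z ∈ closedBall y 1, ∀ i ≤ r, ‖iteratedFDeriv ℝ i U z‖ ≤ D) :
    ‖iteratedFDeriv ℝ (r + 1) U y‖
      ≤ (Module.finrank ℝ E + 1) * max D (κ₀ * (r.factorial * C * D ^ r)) := by
  have hC : 0 ≤ C := (norm_nonneg _).trans (hfC y (by simp) 0 r.zero_le)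
  have hΔ_le (z : E) (hz : z ∈ closedBall y 1) :
      ‖Δ (iteratedFDeriv ℝ r U) z‖ ≤ κ₀ * (r.factorial * C * D ^ r) :=
    (norm_laplacian_iteratedFDeriv_le_of_laplacian_eq hT hO hf hU hUT hΔ (hy hz) (hfC z hz)
      fun i hi hi' => (hUD z hz i hi).trans (le_self_pow₀ hD (by lia))).trans (by gcongr)
  have hsmooth (z : E) (hz : z ∈ closedBall y 1) : ContDiffAt ℝ 2 (iteratedFDeriv ℝ r U) z :=
    (contDiffAt_infty.1 (hU.contDiffAt (hO.mem_nhds (hy hz))) (2 + r)).iteratedFDeriv_right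
      (by norm_cast)
  rw [← norm_fderiv_iteratedFDeriv]
  exact norm_fderiv_le_of_norm_laplacian_le (lt_max_of_lt_left (zero_lt_one.trans_le hD)) hsmooth
    (fun z hz => (hUD z hz r le_rfl).trans (le_max_left _ _))
    fun z hz => (hΔ_le z hz).trans (le_max_right _ _)

theorem exists_norm_iteratedFDeriv_le_of_laplacian_eq {f : F → F} {T K : Set F} (hT : IsOpen T)
    (hK : IsCompact K) (hKT : K ⊆ T) (hf : ContDiffOn ℝ ∞ f T) (κ₀ : ℝ) (r : ℕ) :
    ∃ B : ℝ, ∀ (κ : ℝ) (O : Set E) (U : E → F), |κ| ≤ κ₀ → IsOpen O → ContDiffOn ℝ ∞ U O →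
      MapsTo U O K → (∀ y ∈ O, Δ U y = κ • f (U y)) →
      ∀ y, closedBall y r ⊆ O → ∀ k ≤ r, ‖iteratedFDeriv ℝ k U y‖ ≤ B := by
  induction r with
  | zero =>
    obtain ⟨B, hB⟩ := hK.isBounded.exists_norm_le
    refine ⟨B, fun κ O U _ _ _ hUK _ y hy k hk => ?_⟩
    obtain rfl := Nat.le_zero.1 hk
    simpa using hB _ (hUK (hy (by simp)))
  | succ r ih =>
    obtain ⟨B, hB⟩ := ih
    obtain ⟨C, hC⟩ := exists_norm_iteratedFDeriv_le_of_isCompact hT hK hKT hf r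
    refine ⟨max B ((Module.finrank ℝ E + 1) *
      max (max B 1) (κ₀ * (r.factorial * C * max B 1 ^ r))),
      fun κ O U hκ hO hU hUK hΔ y hy k hk => ?_⟩
    have hball (z : E) (hz : z ∈ closedBall y 1) : closedBall z r ⊆ O := by
      refine (closedBall_subset_closedBall' ?_).trans hy
      push_cast
      linarith [mem_closedBall.1 hz]
    have hmem : closedBall y 1 ⊆ O := fun z hz => hball z hz (by simp)
    have hU_le (z : E) (hz : z ∈ closedBall y 1) (i : ℕ) (hi : i ≤ r) :
        ‖iteratedFDeriv ℝ i U z‖ ≤ B :=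
      hB κ O U hκ hO hU hUK hΔ z (hball z hz) i hi
    rcases hk.lt_or_eq with hk | rfl
    · exact (hU_le y (by simp) k (by lia)).trans (le_max_left _ _)
    · exact (norm_iteratedFDeriv_succ_le_of_laplacian_eq hT hO hf hU (hUK.mono_right hKT) hκ hΔ
        (le_max_right B 1) hmem (fun z hz i hi => hC i hi _ (hUK (hmem hz)))
        fun z hz i hi => (hU_le z hz i hi).trans (le_max_left B 1)).trans (le_max_right _ _)

end InteriorEstimates

section Harnack

variable {E F : Type*} [NormedAddCommGroup E] [NormedSpace ℝ E]
  [NormedAddCommGroup F] [NormedSpace ℝ F]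

theorem norm_le_exp_mul_norm_of_norm_fderiv_le {u : E → F} {s : Set E} {M : ℝ} (hs : Convex ℝ s)
    (hu : ∀ z ∈ s, DifferentiableAt ℝ u z) (hM : ∀ z ∈ s, ‖fderiv ℝ u z‖ ≤ M * ‖u z‖) {x y : E}
    (hx : x ∈ s) (hy : y ∈ s) : ‖u y‖ ≤ Real.exp (M * ‖y - x‖) * ‖u x‖ := by
  let γ (t : ℝ) : E := AffineMap.lineMap x y t
  have hγ (t : ℝ) (ht : t ∈ Icc (0 : ℝ) 1) : γ t ∈ s := hs.lineMap_mem hx hy ht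
  have hderiv (t : ℝ) (ht : t ∈ Icc (0 : ℝ) 1) :
      HasDerivAt (u ∘ γ) (fderiv ℝ u (γ t) (y - x)) t :=
    (hu _ (hγ t ht)).hasFDerivAt.comp_hasDerivAt t AffineMap.hasDerivAt_lineMap
  have hbound (t : ℝ) (ht : t ∈ Ico (0 : ℝ) 1) :
      ‖fderiv ℝ u (γ t) (y - x)‖ ≤ M * ‖y - x‖ * ‖(u ∘ γ) t‖ + 0 :=
    calc ‖fderiv ℝ u (γ t) (y - x)‖ ≤ M * ‖u (γ t)‖ * ‖y - x‖ :=
          (fderiv ℝ u (γ t)).le_of_opNorm_le (hM _ (hγ t (Ico_subset_Icc_self ht))) _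
      _ = M * ‖y - x‖ * ‖(u ∘ γ) t‖ + 0 := by simp only [Function.comp_apply]; ring
  have key := norm_le_gronwallBound_of_norm_deriv_right_le
    (fun t ht => (hderiv t ht).continuousAt.continuousWithinAt)
    (fun t ht => (hderiv t (Ico_subset_Icc_self ht)).hasDerivWithinAt) le_rfl hbound 1 (by simp)
  simpa [γ, gronwallBound_ε0, mul_comm] using key

end Harnack

section BernsteinParameters

/-- Admissible parameters for the Bernstein argument in dimension `n` and with power `p`. The
auxiliary function is `(u + δ) ^ γ * (‖∇ log (u + δ)‖ ^ 2 + d * (u + δ) ^ (p - 1))` with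
`d = e / (γ + (p - 1))`, and `α` is the multiple of `∇w ⊗ ∇w` subtracted from the Hessian of
`w = log (u + δ)` before the trace inequality is applied. The last three fields are the signs of
the coefficients of `F ^ 2`, `F * U` and `U ^ 2`, where `F = ‖∇w‖ ^ 2` and `U = u ^ (p - 1)`. -/
structure IsBernsteinTriple (n p γ α e : ℝ) : Prop where
  weight_neg : γ < 0
  weight_add_pos : 0 < γ + (p - 1)
  pos : 0 < e
  gradient_coeff_pos : 0 < (1 - α) * γ - α ^ 2 + (1 + α) ^ 2 / n - γ ^ 2 / 2 - γ / 2
  mixed_coeff_pos : 0 < (1 - α) * e + e * (p - 2 - γ) / 2 + (2 * (1 + α) / n + 1 - γ / 2) - p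
  source_coeff_pos : e / 2 < 1 / n

theorem exists_weight_exponent {n p : ℝ} (hn : 1 ≤ n) (hp : 1 < p) (hsub : (n - 2) * p < n + 2) :
    ∃ a, 1 < a ∧ (n - 1) * p < a * (n + 2) ∧ a * (n - 2) < n - 1 ∧ 2 * a < p + 1 := by
  have hlower : (n - 1) * p / (n + 2) < (p + 1) / 2 := by
    rw [div_lt_div_iff₀ (by linarith) two_pos]
    nlinarith
  rcases le_or_gt n 2 with hn2 | hn2
  · obtain ⟨a, hlo, hhi⟩ := exists_between (max_lt (by linarith : 1 < (p + 1) / 2) hlower)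
    obtain ⟨h1, h2⟩ := max_lt_iff.1 hlo
    rw [div_lt_iff₀ (by linarith)] at h2
    exact ⟨a, h1, h2, by nlinarith, by linarith⟩
  · have hn2' : 0 < n - 2 := by linarith
    have hupper : (n - 1) * p / (n + 2) < (n - 1) / (n - 2) := by
      rw [div_lt_div_iff₀ (by linarith) hn2']
      nlinarith
    have hone : 1 < (n - 1) / (n - 2) := by rw [lt_div_iff₀ hn2']; linarith
    obtain ⟨a, hlo, hhi⟩ := exists_between
      (max_lt (lt_min (by linarith : 1 < (p + 1) / 2) hone) (lt_min hlower hupper))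
    obtain ⟨h1, h2⟩ := max_lt_iff.1 hlo
    obtain ⟨h3, h4⟩ := lt_min_iff.1 hhi
    rw [div_lt_iff₀ (by linarith)] at h2
    rw [lt_div_iff₀ hn2'] at h4
    exact ⟨a, h1, h2, h4, by linarith⟩

theorem exists_gradient_coeff_pos {n a : ℝ} (hn : 1 ≤ n) (ha : 1 < a)
    (han : a * (n - 2) < n - 1) :
    ∃ α, 0 < (1 - α) * (2 - 2 * a) - α ^ 2 + (1 + α) ^ 2 / n - (2 - 2 * a) ^ 2 / 2
      - (2 - 2 * a) / 2 := by
  have hcoeff (t : ℝ) : (1 - (n * (a * t) - 1)) * (2 - 2 * a) - (n * (a * t) - 1) ^ 2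
      + (1 + (n * (a * t) - 1)) ^ 2 / n - (2 - 2 * a) ^ 2 / 2 - (2 - 2 * a) / 2
      = a * (1 - a * (2 - 2 * n * t + n * (n - 1) * t ^ 2)) := by
    field_simp
    ring
  rcases hn.eq_or_lt with rfl | hn
  · exact ⟨_, (by nlinarith : _ < _).trans_eq (hcoeff 1).symm⟩
  · have hn' : 0 < n - 1 := by linarith
    refine ⟨_, lt_of_lt_of_eq ?_ (hcoeff (1 / (n - 1))).symm⟩
    have : a * (2 - 2 * n * (1 / (n - 1)) + n * (n - 1) * (1 / (n - 1)) ^ 2)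
        = a * (n - 2) / (n - 1) := by
      field_simp
      ring
    rw [this]
    have := (div_lt_one hn').2 han
    nlinarith

theorem exists_isBernsteinTriple {n p : ℝ} (hn : 1 ≤ n) (hp : 1 < p)
    (hsub : (n - 2) * p < n + 2) : ∃ γ α e, IsBernsteinTriple n p γ α e := by
  obtain ⟨a, ha, hap, han, hap'⟩ := exists_weight_exponent hn hp hsub
  obtain ⟨α, hα⟩ := exists_gradient_coeff_pos hn ha han
  let mixed (e : ℝ) : ℝ := (1 - α) * e + e * (p - 2 - (2 - 2 * a)) / 2
    + (2 * (1 + α) / n + 1 - (2 - 2 * a) / 2) - p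
  have hlimit : 0 < mixed (2 / n) := by
    have : mixed (2 / n) = (a * (n + 2) - (n - 1) * p) / n := by
      simp only [mixed]
      field_simp
      ring
    rw [this]
    exact div_pos (by linarith) (by linarith)
  have hcont : Continuous mixed := by fun_prop
  have hn_pos : 0 < 2 / n := by positivity
  obtain ⟨e, ⟨hmixed, he_pos⟩, he⟩ := (((hcont.continuousAt.eventually_const_lt hlimit).and
    (lt_mem_nhds hn_pos)).filter_mono (nhdsWithin_le_nhds (s := Iio (2 / n)))).and
    self_mem_nhdsWithin |>.exists
  refine ⟨2 - 2 * a, α, e, by linarith, by linarith, he_pos, hα, hmixed, ?_⟩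
  rw [div_lt_iff₀ two_pos]
  convert he using 1
  ring

end BernsteinParameters

section QuadraticInequality

theorem mul_sq_sub_le_quadratic {c₁ c₂ c₃ p ν η ε F G U g : ℝ} (hκ : 0 ≤ c₂ + c₃ - p)
    (hν : 0 ≤ ν) (hη : 0 ≤ η) (hm_nonneg : 0 ≤ min c₁ (ν - η)) (hF : 0 ≤ F) (hg : 0 ≤ g)
    (hgU : g ≤ U) (hUG : U ≤ G) (hGε : G ≤ U + ε) (hgε : U ≤ g + ε) :
    min c₁ (ν - η) / 2 * (F + U) ^ 2 - (|c₂| + |c₃| + 2 * ν + η) * ε * (F + U)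
      ≤ c₁ * F ^ 2 + F * (c₂ * G + c₃ * g - p * U) + ν * g ^ 2 - η * g * G := by
  have hU : 0 ≤ U := hg.trans hgU
  have hε : 0 ≤ ε := by linarith
  have h₂ : -(|c₂| * ε) ≤ c₂ * (G - U) := by
    refine (neg_le_neg ?_).trans (neg_abs_le _)
    rw [abs_mul, abs_of_nonneg (sub_nonneg.2 hUG)]
    gcongr
    linarith
  have h₃ : -(|c₃| * ε) ≤ c₃ * (g - U) := by
    refine (neg_le_neg ?_).trans (neg_abs_le _)
    rw [abs_mul, abs_of_nonpos (sub_nonpos.2 hgU)]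
    gcongr
    linarith
  have hsq : U ^ 2 - 2 * ε * U ≤ g ^ 2 := by nlinarith
  have hprod : g * G ≤ U * (U + ε) := mul_le_mul hgU hGε (by linarith) hU
  have hmin : min c₁ (ν - η) / 2 * (F + U) ^ 2 ≤ c₁ * F ^ 2 + (ν - η) * U ^ 2 := by
    set m := min c₁ (ν - η) with hm
    have hm₁ := mul_le_mul_of_nonneg_right (min_le_left c₁ (ν - η)) (sq_nonneg F)
    have hm₂ := mul_le_mul_of_nonneg_right (min_le_right c₁ (ν - η)) (sq_nonneg U)
    rw [← hm] at hm₁ hm₂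
    nlinarith [mul_nonneg hm_nonneg (sq_nonneg (F - U))]
  have herror : ((|c₂| + |c₃|) * F + (2 * ν + η) * U) * ε
      ≤ (|c₂| + |c₃| + 2 * ν + η) * ε * (F + U) := by
    have : 0 ≤ ((|c₂| + |c₃|) * U + (2 * ν + η) * F) * ε := by positivity
    linarith
  have hκFU := mul_nonneg hκ (mul_nonneg hF hU)
  linarith [mul_le_mul_of_nonneg_left hsq hν, mul_le_mul_of_nonneg_left hprod hη,
    mul_le_mul_of_nonneg_left h₂ hF, mul_le_mul_of_nonneg_left h₃ hF]

theorem le_sq_mul_of_mul_sq_le {m P Y z : ℝ} (hm : 0 < m) (hY : 0 < Y) (hz : 0 ≤ z)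
    (h : m * Y ^ 2 ≤ P * √(z * Y) * Y) : Y ≤ (P / m) ^ 2 * z := by
  have hmY : m * Y ≤ P * √(z * Y) := by
    rw [sq, ← mul_assoc] at h
    exact le_of_mul_le_mul_right h hY
  have hsq : (m * Y) ^ 2 ≤ P ^ 2 * (z * Y) :=
    calc (m * Y) ^ 2 ≤ (P * √(z * Y)) ^ 2 := by gcongr
      _ = P ^ 2 * (z * Y) := by rw [mul_pow, Real.sq_sqrt (by positivity)]
  rw [div_pow, div_mul_eq_mul_div, le_div_iff₀ (by positivity)]
  exact le_of_mul_le_mul_right (by linarith) hY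

theorem le_max_mul_of_quadratic_le {m c θ K B Y z : ℝ} (hm : 0 < m) (hc : 0 ≤ c)
    (hcθ : c * θ ≤ m / 2) (hK : 0 ≤ K) (hB : 0 ≤ B) (hz : 1 ≤ z)
    (h : m * Y ^ 2 - c * (θ * Y + K) * Y ≤ B * Y * (z + √(z * Y))) :
    Y ≤ max 1 (((c * K + 2 * B) / (m / 2)) ^ 2) * z := by
  rcases le_or_gt Y z with hYz | hzY
  · nlinarith [le_max_left 1 (((c * K + 2 * B) / (m / 2)) ^ 2)]
  have hY : 0 < Y := by linarith
  have hz_sqrt : z ≤ √(z * Y) := Real.le_sqrt_of_sq_le (by nlinarith)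
  refine (le_sq_mul_of_mul_sq_le (half_pos hm) hY (by linarith) ?_).trans
    (mul_le_mul_of_nonneg_right (le_max_right _ _) (by linarith))
  calc m / 2 * Y ^ 2 ≤ m * Y ^ 2 - c * θ * Y ^ 2 := by nlinarith [sq_nonneg Y]
    _ ≤ c * K * Y * 1 + B * Y * (z + √(z * Y)) := by linarith
    _ ≤ c * K * Y * √(z * Y) + B * Y * (√(z * Y) + √(z * Y)) := by
        gcongr
        exact hz.trans hz_sqrt
    _ = (c * K + 2 * B) * √(z * Y) * Y := by ring

theorem add_mul_le_mul_of_add_le {F G U d θ K t : ℝ} (hd : 0 ≤ d) (hθ : 0 ≤ θ) (hK : 0 ≤ K)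
    (hF : 0 ≤ F) (hU : 0 ≤ U) (hG : G ≤ U + (θ * U + K)) (hFU : F + U ≤ t) (ht : 1 ≤ t) :
    F + d * G ≤ (1 + d * (1 + θ + K)) * t := by
  have hGt : G ≤ (1 + θ + K) * t :=
    calc G ≤ (1 + θ) * U + K * 1 := by linarith
      _ ≤ (1 + θ) * t + K * t := by gcongr; linarith
      _ = (1 + θ + K) * t := by ring
  linarith [mul_le_mul_of_nonneg_left hGt hd]

theorem exists_le_mul_of_quadratic_le {c₁ c₂ c₃ p ν η d A : ℝ} (hc₁ : 0 < c₁)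
    (hκ : 0 ≤ c₂ + c₃ - p) (hη : 0 ≤ η) (hην : η < ν) (hd : 0 ≤ d) (hA : 0 ≤ A) :
    ∃ θ : ℝ, 0 < θ ∧ ∀ K, 0 ≤ K → ∃ C, ∀ F G U g z : ℝ, 0 ≤ F → 0 ≤ g → g ≤ U → U ≤ G →
      G ≤ U + (θ * U + K) → U ≤ g + (θ * U + K) → 1 ≤ z →
      c₁ * F ^ 2 + F * (c₂ * G + c₃ * g - p * U) + ν * g ^ 2 - η * g * G
        ≤ (F + d * G) * (A * (z + √(z * F))) → F + d * G ≤ C * z := by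
  set m := min c₁ (ν - η) / 2
  set c := |c₂| + |c₃| + 2 * ν + η
  have hm : 0 < m := half_pos (lt_min hc₁ (sub_pos.2 hην))
  have hν : 0 < ν := hη.trans_lt hην
  have hc : 0 < c := by positivity
  obtain ⟨θ, hθ, hcθ⟩ : ∃ θ, 0 < θ ∧ c * θ = m / 2 :=
    ⟨m / 2 / c, by positivity, mul_div_cancel₀ _ hc.ne'⟩
  refine ⟨θ, hθ, fun K hK => ?_⟩
  set D := 1 + d * (1 + θ + K)
  refine ⟨D * max 1 (((c * K + 2 * (D * A)) / (m / 2)) ^ 2),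
    fun F G U g z hF hg hgU hUG hGε hgε hz h => ?_⟩
  have hU : 0 ≤ U := hg.trans hgU
  have hQ (t : ℝ) : F + U ≤ t → 1 ≤ t → F + d * G ≤ D * t :=
    add_mul_le_mul_of_add_le hd hθ.le hK hF hU hGε
  rw [mul_assoc]
  refine hQ _ ?_ (one_le_mul_of_one_le_of_one_le (le_max_left _ _) hz)
  rcases le_or_gt (F + U) 1 with hY | hY
  · exact hY.trans (one_le_mul_of_one_le_of_one_le (le_max_left _ _) hz)
  refine le_max_mul_of_quadratic_le hm hc.le hcθ.le hK (by positivity) hz ?_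
  calc m * (F + U) ^ 2 - c * (θ * (F + U) + K) * (F + U)
      ≤ m * (F + U) ^ 2 - c * (θ * U + K) * (F + U) := by
        gcongr
        exact le_add_of_nonneg_left hF
    _ ≤ (F + d * G) * (A * (z + √(z * F))) := (mul_sq_sub_le_quadratic hκ hν.le hη
        (le_min hc₁.le (sub_pos.2 hην).le) hF hg hgU hUG hGε hgε).trans h
    _ ≤ (D * (F + U)) * (A * (z + √(z * (F + U)))) := by
        gcongr
        · exact hQ _ le_rfl hY.le
        · exact le_add_of_nonneg_right hU
    _ = D * A * (F + U) * (z + √(z * (F + U))) := by ring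

end QuadraticInequality

section LogarithmicDerivatives

variable {E : Type*} [NormedAddCommGroup E] [InnerProductSpace ℝ E] {c x : E}

theorem hasFDerivAt_norm_sub_sq (c x : E) :
    HasFDerivAt (fun y => ‖y - c‖ ^ 2) (2 • innerSL ℝ (x - c)) x :=
  ((hasFDerivAt_id x).sub_const c).norm_sq

theorem contDiffAt_two_mul_log_one_sub_norm_sub_sq (hx : 1 - ‖x - c‖ ^ 2 ≠ 0) {n : ℕ∞ω} :
    ContDiffAt ℝ n (fun y => 2 * Real.log (1 - ‖y - c‖ ^ 2)) x := by
  have hZ : ContDiff ℝ n fun y => 1 - ‖y - c‖ ^ 2 :=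
    contDiff_const.sub ((contDiff_id.sub contDiff_const).norm_sq ℝ)
  exact contDiffAt_const.mul (hZ.contDiffAt.log hx)

theorem hasDerivAt_two_mul_log_one_sub {t : ℝ} (ht : 1 - t ≠ 0) :
    HasDerivAt (fun t => 2 * Real.log (1 - t)) (-2 * (1 - t)⁻¹) t := by
  refine (((hasDerivAt_id t).const_sub 1 |>.log ht).const_mul 2).congr_deriv ?_
  simp only [id]
  ring

variable [FiniteDimensional ℝ E] {f h Q : E → ℝ}

theorem gradient_comp {φ : ℝ → ℝ} {φ' : ℝ} (hf : DifferentiableAt ℝ f x)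
    (hφ : HasDerivAt φ φ' (f x)) : ∇ (fun y => φ (f y)) x = φ' • ∇ f x := by
  have hcomp : HasFDerivAt (fun y => φ (f y)) (φ' • fderiv ℝ f x) x :=
    hφ.comp_hasFDerivAt x hf.hasFDerivAt
  simp only [gradient, hcomp.fderiv, map_smul]

theorem gradient_add (hf : DifferentiableAt ℝ f x) (hh : DifferentiableAt ℝ h x) :
    ∇ (f + h) x = ∇ f x + ∇ h x := by
  simp only [gradient, fderiv_add hf hh, map_add]

theorem gradient_const_smul (hf : DifferentiableAt ℝ f x) (a : ℝ) : ∇ (a • f) x = a • ∇ f x := by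
  simp only [gradient, fderiv_const_smul hf, map_smul]

theorem gradient_log (hf : DifferentiableAt ℝ f x) (hx : f x ≠ 0) :
    ∇ (fun y => Real.log (f y)) x = (f x)⁻¹ • ∇ f x :=
  gradient_comp hf (Real.hasDerivAt_log hx)

theorem laplacian_log (hf : ContDiffAt ℝ 2 f x) (hx : f x ≠ 0) :
    Δ (fun y => Real.log (f y)) x = Δ f x / f x - ‖∇ (fun y => Real.log (f y)) x‖ ^ 2 := by
  have hlog : ∀ᶠ t in 𝓝 (f x), HasDerivAt Real.log t⁻¹ t := by
    filter_upwards [isOpen_ne.mem_nhds hx] with t ht using Real.hasDerivAt_log ht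
  rw [laplacian_comp hf hlog (hasDerivAt_inv hx),
    gradient_log (hf.differentiableAt two_ne_zero) hx, norm_smul, mul_pow, Real.norm_eq_abs, sq_abs]
  ring

theorem gradient_eq_neg_smul_of_isLocalMax_log_add (hQ : DifferentiableAt ℝ Q x)
    (hh : DifferentiableAt ℝ h x) (hQx : Q x ≠ 0)
    (hmax : IsLocalMax ((fun y => Real.log (Q y)) + h) x) : ∇ Q x = -(Q x • ∇ h x) := by
  have hcrit : ∇ ((fun y => Real.log (Q y)) + h) x = 0 := by
    simp only [gradient, hmax.fderiv_eq_zero, map_zero]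
  rw [gradient_add (hQ.log hQx) hh, gradient_log hQ hQx] at hcrit
  rw [eq_neg_iff_add_eq_zero, ← smul_zero (Q x), ← hcrit, smul_add, smul_inv_smul₀ hQx]

theorem laplacian_le_of_isLocalMax_log_add (hQ : ContDiffAt ℝ 2 Q x) (hh : ContDiffAt ℝ 2 h x)
    (hQx : 0 < Q x) (hmax : IsLocalMax ((fun y => Real.log (Q y)) + h) x) :
    Δ Q x ≤ Q x * (‖∇ h x‖ ^ 2 - Δ h x) := by
  have hΔ : Δ ((fun y => Real.log (Q y)) + h) x ≤ 0 :=
    laplacian_nonpos_of_isLocalMax ((hQ.log hQx.ne').add hh) hmax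
  rw [(hQ.log hQx.ne').laplacian_add hh, laplacian_log hQ hQx.ne',
    gradient_log (hQ.differentiableAt two_ne_zero) hQx.ne',
    gradient_eq_neg_smul_of_isLocalMax_log_add (hQ.differentiableAt two_ne_zero)
      (hh.differentiableAt two_ne_zero) hQx.ne' hmax, smul_neg, inv_smul_smul₀ hQx.ne',
    norm_neg] at hΔ
  rw [← div_le_iff₀' hQx]
  linarith

theorem gradient_norm_sub_sq (c x : E) : ∇ (fun y => ‖y - c‖ ^ 2) x = (2 : ℝ) • (x - c) := by
  refine ext_inner_right ℝ fun v => ?_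
  rw [inner_gradient_left, (hasFDerivAt_norm_sub_sq c x).fderiv]
  simp [real_inner_smul_left, inner_sub_left]

theorem gradient_two_mul_log_one_sub_norm_sub_sq (hx : 1 - ‖x - c‖ ^ 2 ≠ 0) :
    ∇ (fun y => 2 * Real.log (1 - ‖y - c‖ ^ 2)) x = -((4 / (1 - ‖x - c‖ ^ 2)) • (x - c)) := by
  rw [gradient_comp (φ := fun t => 2 * Real.log (1 - t))
    (hasFDerivAt_norm_sub_sq c x).differentiableAt (hasDerivAt_two_mul_log_one_sub hx),
    gradient_norm_sub_sq, smul_smul, ← neg_smul]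
  congr 1
  ring

theorem laplacian_two_mul_log_one_sub_norm_sub_sq (hx : 1 - ‖x - c‖ ^ 2 ≠ 0) :
    Δ (fun y => 2 * Real.log (1 - ‖y - c‖ ^ 2)) x =
      -(4 * Module.finrank ℝ E / (1 - ‖x - c‖ ^ 2)) -
        ‖(4 / (1 - ‖x - c‖ ^ 2)) • (x - c)‖ ^ 2 / 2 := by
  have hφ' : HasDerivAt (fun t : ℝ => -2 * (1 - t)⁻¹) (-2 / (1 - ‖x - c‖ ^ 2) ^ 2)
      (‖x - c‖ ^ 2) := by
    refine (((hasDerivAt_id _).const_sub 1 |>.inv hx).const_mul (-2)).congr_deriv ?_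
    ring
  have hne : ∀ᶠ t in 𝓝 (‖x - c‖ ^ 2), 1 - t ≠ 0 :=
    (continuous_const.sub continuous_id).continuousAt.eventually_ne hx
  have hf : ContDiffAt ℝ 2 (fun y => ‖y - c‖ ^ 2) x :=
    ((contDiff_id.sub contDiff_const).norm_sq ℝ).contDiffAt
  rw [laplacian_comp hf (hne.mono fun t ht => hasDerivAt_two_mul_log_one_sub ht) hφ',
    laplacian_norm_sub_sq, gradient_norm_sub_sq, norm_smul, norm_smul, mul_pow, mul_pow,
    Real.norm_eq_abs, Real.norm_eq_abs, sq_abs, sq_abs]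
  field_simp
  ring

end LogarithmicDerivatives

section Bochner

variable {E ι : Type*} [NormedAddCommGroup E] [InnerProductSpace ℝ E] [Fintype ι]

theorem trace_sub_sq_div_card_le (b : OrthonormalBasis ι ℝ E) (B : E →L[ℝ] E) (ξ : E) (α : ℝ) :
    2 * α * ⟪ξ, B ξ⟫ - α ^ 2 * (‖ξ‖ ^ 2) ^ 2
        + (∑ i, ⟪b i, B (b i)⟫ - α * ‖ξ‖ ^ 2) ^ 2 / Fintype.card ι ≤ ∑ i, ‖B (b i)‖ ^ 2 := by
  -- Apply `(tr M) ^ 2 ≤ card ι * ‖M‖ ^ 2` (Hilbert-Schmidt norm) to `M = B - α • ξ ⊗ ξ`.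
  have hξ : ∑ i, ⟪b i, ξ⟫ ^ 2 = ‖ξ‖ ^ 2 := by
    simpa only [Real.norm_eq_abs, sq_abs] using b.sum_sq_norm_inner_right ξ
  have hBξ : ∑ i, ⟪b i, ξ⟫ * ⟪ξ, B (b i)⟫ = ⟪ξ, B ξ⟫ := by
    have := congr(⟪ξ, B $(b.sum_repr' ξ)⟫)
    simpa only [map_sum, map_smul, inner_sum, real_inner_smul_right] using this
  have hnorm : ∑ i, ‖B (b i) - (α * ⟪b i, ξ⟫) • ξ‖ ^ 2
      = ∑ i, ‖B (b i)‖ ^ 2 - 2 * α * ⟪ξ, B ξ⟫ + α ^ 2 * (‖ξ‖ ^ 2) ^ 2 := by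
    have hterm (i : ι) : ‖B (b i) - (α * ⟪b i, ξ⟫) • ξ‖ ^ 2 = ‖B (b i)‖ ^ 2
        - 2 * α * (⟪b i, ξ⟫ * ⟪ξ, B (b i)⟫) + α ^ 2 * ‖ξ‖ ^ 2 * ⟪b i, ξ⟫ ^ 2 := by
      rw [norm_sub_sq_real, real_inner_smul_right, norm_smul, mul_pow, Real.norm_eq_abs, sq_abs,
        real_inner_comm (B (b i))]
      ring
    simp only [hterm, Finset.sum_add_distrib, Finset.sum_sub_distrib, ← Finset.mul_sum, hBξ, hξ]
    ring
  have htrace : ∑ i, ⟪b i, B (b i) - (α * ⟪b i, ξ⟫) • ξ⟫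
      = ∑ i, ⟪b i, B (b i)⟫ - α * ‖ξ‖ ^ 2 := by
    simp only [inner_sub_right, real_inner_smul_right, Finset.sum_sub_distrib, mul_assoc, ← sq,
      ← Finset.mul_sum, hξ]
  have hcs : (∑ i, ⟪b i, B (b i) - (α * ⟪b i, ξ⟫) • ξ⟫) ^ 2 / Fintype.card ι
      ≤ ∑ i, ‖B (b i) - (α * ⟪b i, ξ⟫) • ξ‖ ^ 2 := by
    refine div_le_of_le_mul₀ (Nat.cast_nonneg _) (by positivity) ?_
    rw [mul_comm]
    refine sq_sum_le_card_mul_sum_sq.trans ?_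
    rw [Finset.card_univ]
    gcongr ?_ * ∑ i, ?_ with i
    rw [← sq_abs]
    gcongr
    simpa only [b.norm_eq_one, one_mul] using abs_real_inner_le_norm (b i) _
  rw [htrace, hnorm] at hcs
  linarith

variable [FiniteDimensional ℝ E] {w : E → ℝ} {x : E}

theorem contDiffAt_gradient {n m : ℕ∞ω} (hw : ContDiffAt ℝ n w x) (hmn : m + 1 ≤ n) :
    ContDiffAt ℝ m (∇ w) x :=
  (InnerProductSpace.toDual ℝ E).symm.contDiff.contDiffAt.comp x (hw.fderiv_right hmn)

theorem laplacian_norm_gradient_sq (b : OrthonormalBasis ι ℝ E) (hw : ContDiffAt ℝ 3 w x) :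
    Δ (fun y => ‖∇ w y‖ ^ 2) x
      = 2 * fderiv ℝ (Δ w) x (∇ w x) + 2 * ∑ i, ‖fderiv ℝ (∇ w) x (b i)‖ ^ 2 := by
  rw [laplacian_norm_sq b (contDiffAt_gradient hw (by norm_num)), laplacian_gradient hw,
    inner_gradient_right, conj_trivial]

theorem inner_fderiv_gradient (hw : ContDiffAt ℝ 2 w x) (a v : E) :
    ⟪v, fderiv ℝ (∇ w) x a⟫ = fderiv ℝ (fderiv ℝ w) x a v := by
  have hgrad : DifferentiableAt ℝ (∇ w) x :=
    (contDiffAt_gradient (m := 1) hw (by norm_num)).differentiableAt one_ne_zero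
  have hfderiv : DifferentiableAt ℝ (fderiv ℝ w) x :=
    (hw.fderiv_right (m := 1) (by norm_num)).differentiableAt one_ne_zero
  have hinner := (hasFDerivAt_const v x).inner ℝ hgrad.hasFDerivAt
  simp only [inner_gradient_right, conj_trivial] at hinner
  simpa using congr($(hinner.unique (hfderiv.hasFDerivAt.clm_apply (hasFDerivAt_const v x))) a)

theorem laplacian_eq_sum_inner_fderiv_gradient (b : OrthonormalBasis ι ℝ E)
    (hw : ContDiffAt ℝ 2 w x) : Δ w x = ∑ i, ⟪b i, fderiv ℝ (∇ w) x (b i)⟫ := by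
  simp only [laplacian_eq_sum_fderiv_fderiv b, inner_fderiv_gradient hw]

end Bochner

section BernsteinInequality

variable {E : Type*} [NormedAddCommGroup E] [InnerProductSpace ℝ E] [FiniteDimensional ℝ E]

/-- The quantity `‖∇w‖ ^ 2 + d * exp (s * w)` to which the maximum principle is applied. For
`w = log (u + δ)` it is `‖∇u‖ ^ 2 / (u + δ) ^ 2 + d * (u + δ) ^ s`. -/
noncomputable def bernsteinQuantity (s d : ℝ) (w : E → ℝ) (x : E) : ℝ :=
  ‖∇ w x‖ ^ 2 + d * Real.exp (s * w x)

variable {s d : ℝ} {w ζ : E → ℝ} {x : E}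

theorem contDiffAt_bernsteinQuantity (hw : ContDiffAt ℝ 3 w x) :
    ContDiffAt ℝ 2 (bernsteinQuantity s d w) x :=
  ((contDiffAt_gradient hw (by norm_num)).norm_sq ℝ).add
    (contDiffAt_const.mul (contDiffAt_const.mul (hw.of_le (by norm_num))).exp)

theorem hasFDerivAt_norm_gradient_sq (hw : ContDiffAt ℝ 2 w x) :
    HasFDerivAt (fun y => ‖∇ w y‖ ^ 2) (2 • (innerSL ℝ (∇ w x)).comp (fderiv ℝ (∇ w) x)) x :=
  ((contDiffAt_gradient (m := 1) hw (by norm_num)).differentiableAt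
    one_ne_zero).hasFDerivAt.norm_sq

theorem fderiv_bernsteinQuantity_gradient (hw : ContDiffAt ℝ 2 w x) :
    fderiv ℝ (bernsteinQuantity s d w) x (∇ w x) = 2 * ⟪∇ w x, fderiv ℝ (∇ w) x (∇ w x)⟫
      + d * s * Real.exp (s * w x) * ‖∇ w x‖ ^ 2 := by
  have hexp := (((hw.differentiableAt two_ne_zero).hasFDerivAt.const_mul s).exp).const_mul d
  have hQ : HasFDerivAt (bernsteinQuantity s d w) _ x := (hasFDerivAt_norm_gradient_sq hw).add hexp
  rw [hQ.fderiv]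
  simp only [add_apply, smul_apply, ContinuousLinearMap.comp_apply, coe_innerSL_apply,
    nsmul_eq_mul, Nat.cast_ofNat, ← inner_gradient_left, inner_self_eq_norm_sq_to_K,
    Real.ringHom_apply, smul_eq_mul, add_right_inj]
  ring

theorem laplacian_exp_mul (hw : ContDiffAt ℝ 2 w x) (s : ℝ) :
    Δ (fun y => Real.exp (s * w y)) x = s * Real.exp (s * w x) * (Δ w x + s * ‖∇ w x‖ ^ 2) := by
  have hφ (a t : ℝ) : HasDerivAt (fun t => a * Real.exp (s * t)) (a * s * Real.exp (s * t)) t := by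
    refine ((((hasDerivAt_id t).const_mul s).exp).const_mul a).congr_deriv ?_
    simp only [id, mul_one]
    ring
  have := laplacian_comp hw (.of_forall fun t => hφ 1 t) (hφ (1 * s) (w x))
  simp only [one_mul] at this
  rw [this]
  ring

variable {ψ : ℝ → ℝ} {ψ' : ℝ}

theorem fderiv_laplacian_gradient (hw : ContDiffAt ℝ 2 w x)
    (hΔ : Δ w =ᶠ[𝓝 x] fun y => -ψ (w y) - ‖∇ w y‖ ^ 2) (hψ : HasDerivAt ψ ψ' (w x)) :
    fderiv ℝ (Δ w) x (∇ w x)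
      = -ψ' * ‖∇ w x‖ ^ 2 - 2 * ⟪∇ w x, fderiv ℝ (∇ w) x (∇ w x)⟫ := by
  have hψw : HasFDerivAt (fun y => ψ (w y)) (ψ' • fderiv ℝ w x) x :=
    hψ.comp_hasFDerivAt x (hw.differentiableAt two_ne_zero).hasFDerivAt
  have hsub : HasFDerivAt (fun y => -ψ (w y) - ‖∇ w y‖ ^ 2) _ x :=
    hψw.neg.sub (hasFDerivAt_norm_gradient_sq hw)
  rw [hΔ.fderiv_eq, hsub.fderiv]
  simp [← inner_gradient_left]

theorem laplacian_bernsteinQuantity {ι : Type*} [Fintype ι] (b : OrthonormalBasis ι ℝ E)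
    (hw : ContDiffAt ℝ 3 w x) (hΔ : Δ w =ᶠ[𝓝 x] fun y => -ψ (w y) - ‖∇ w y‖ ^ 2)
    (hψ : HasDerivAt ψ ψ' (w x)) :
    Δ (bernsteinQuantity s d w) x = -2 * ψ' * ‖∇ w x‖ ^ 2
      - 4 * ⟪∇ w x, fderiv ℝ (∇ w) x (∇ w x)⟫ + 2 * ∑ i, ‖fderiv ℝ (∇ w) x (b i)‖ ^ 2
      + d * s * Real.exp (s * w x) * ((s - 1) * ‖∇ w x‖ ^ 2 - ψ (w x)) := by
  have hw2 : ContDiffAt ℝ 2 w x := hw.of_le (by norm_num)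
  have hgrad : ContDiffAt ℝ 2 (fun y => ‖∇ w y‖ ^ 2) x :=
    (contDiffAt_gradient hw (by norm_num)).norm_sq ℝ
  have hexp : ContDiffAt ℝ 2 (fun y => Real.exp (s * w y)) x := (contDiffAt_const.mul hw2).exp
  have hdexp : ContDiffAt ℝ 2 (d • fun y => Real.exp (s * w y)) x := hexp.const_smul d
  have hQ : bernsteinQuantity s d w =
    (fun y => ‖∇ w y‖ ^ 2) + d • fun y => Real.exp (s * w y) := rfl
  rw [hQ, hgrad.laplacian_add hdexp, InnerProductSpace.laplacian_smul d hexp,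
    laplacian_norm_gradient_sq b hw, fderiv_laplacian_gradient hw2 hΔ hψ, laplacian_exp_mul hw2,
    hΔ.self_of_nhds, smul_eq_mul]
  ring

theorem inner_fderiv_gradient_eq_of_isLocalMax {h : E → ℝ} (hw : ContDiffAt ℝ 3 w x)
    (hh : DifferentiableAt ℝ h x) (hQ : bernsteinQuantity s d w x ≠ 0)
    (hmax : IsLocalMax ((fun y => Real.log (bernsteinQuantity s d w y)) + h) x) :
    2 * ⟪∇ w x, fderiv ℝ (∇ w) x (∇ w x)⟫ = -bernsteinQuantity s d w x * ⟪∇ h x, ∇ w x⟫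
      - d * s * Real.exp (s * w x) * ‖∇ w x‖ ^ 2 := by
  have hQ1 := (contDiffAt_bernsteinQuantity (s := s) (d := d) hw).differentiableAt two_ne_zero
  rw [eq_sub_iff_add_eq, ← fderiv_bernsteinQuantity_gradient (hw.of_le (by norm_num)),
    ← inner_gradient_left, gradient_eq_neg_smul_of_isLocalMax_log_add hQ1 hh hQ hmax,
    inner_neg_left, real_inner_smul_left, neg_mul]

/- All second derivatives of `w` are eliminated: the square of the Hessian in `Δ Q` through the
trace inequality, the remaining linear term through `∇ Q = -Q • ∇ (γ • w + ζ)`. -/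
theorem bernstein_inequality_of_isLocalMax {γ F G g : ℝ} (α : ℝ) (hw : ContDiffAt ℝ 3 w x)
    (hζ : ContDiffAt ℝ 2 ζ x) (hΔ : Δ w =ᶠ[𝓝 x] fun y => -ψ (w y) - ‖∇ w y‖ ^ 2)
    (hψ : HasDerivAt ψ ψ' (w x)) (hQ : 0 < bernsteinQuantity s d w x)
    (hmax : IsLocalMax ((fun y => Real.log (bernsteinQuantity s d w y)) + (γ • w + ζ)) x)
    (hF : ‖∇ w x‖ ^ 2 = F) (hG : Real.exp (s * w x) = G) (hg : ψ (w x) = g) :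
    ((1 - α) * γ - α ^ 2 + (1 + α) ^ 2 / Module.finrank ℝ E - γ ^ 2 / 2 - γ / 2) * F ^ 2
        + F * (((1 - α) * (d * (γ + s)) + d * (γ + s) * (s - 1 - γ) / 2) * G
          + (2 * (1 + α) / Module.finrank ℝ E - γ / 2) * g - ψ')
        + 1 / Module.finrank ℝ E * g ^ 2 - d * (γ + s) / 2 * g * G
      ≤ (F + d * G) * ((‖∇ ζ x‖ ^ 2 - Δ ζ x) / 2 - (1 - α - γ) * ⟪∇ ζ x, ∇ w x⟫) := by
  set b := stdOrthonormalBasis ℝ E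
  have hw2 : ContDiffAt ℝ 2 w x := hw.of_le (by norm_num)
  have hγw : ContDiffAt ℝ 2 (γ • w) x := hw2.const_smul γ
  have hh : ContDiffAt ℝ 2 (γ • w + ζ) x := hγw.add hζ
  have hΔx : Δ w x = -g - F := by rw [hΔ.self_of_nhds, ← hg, ← hF]
  have hQx : bernsteinQuantity s d w x = F + d * G := by rw [← hF, ← hG]; rfl
  have hgrad : ∇ (γ • w + ζ) x = γ • ∇ w x + ∇ ζ x := by
    rw [gradient_add (hγw.differentiableAt two_ne_zero) (hζ.differentiableAt two_ne_zero),
      gradient_const_smul (hw2.differentiableAt two_ne_zero)]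
  have hfirst := inner_fderiv_gradient_eq_of_isLocalMax hw (hh.differentiableAt two_ne_zero)
    hQ.ne' hmax
  rw [hQx, hF, hG, hgrad, inner_add_left, real_inner_smul_left, real_inner_self_eq_norm_sq, hF]
    at hfirst
  have hsecond := laplacian_le_of_isLocalMax_log_add (contDiffAt_bernsteinQuantity hw) hh hQ hmax
  rw [laplacian_bernsteinQuantity b hw hΔ hψ, hQx, hgrad, hγw.laplacian_add hζ,
    InnerProductSpace.laplacian_smul γ hw2, hΔx, hF, hG, hg, norm_add_sq_real, norm_smul, mul_pow,
    Real.norm_eq_abs, sq_abs, hF, real_inner_smul_left, real_inner_comm (∇ ζ x), smul_eq_mul]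
    at hsecond
  have htrace := trace_sub_sq_div_card_le b (fderiv ℝ (∇ w) x) (∇ w x) α
  rw [← laplacian_eq_sum_inner_fderiv_gradient b hw2, hΔx, Fintype.card_fin, hF] at htrace
  linear_combination htrace + hsecond / 2 + (1 - α) * hfirst

end BernsteinInequality

section Cutoff

variable {E : Type*} [NormedAddCommGroup E] [InnerProductSpace ℝ E] [FiniteDimensional ℝ E]
  {c x : E}

theorem norm_gradient_two_mul_log_one_sub_norm_sub_sq_le (hx : ‖x - c‖ < 1) :
    ‖∇ (fun y => 2 * Real.log (1 - ‖y - c‖ ^ 2)) x‖ ≤ 4 / (1 - ‖x - c‖ ^ 2) := by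
  have hZ : 0 < 1 - ‖x - c‖ ^ 2 := sub_pos.2 (pow_lt_one₀ (norm_nonneg _) hx two_ne_zero)
  rw [gradient_two_mul_log_one_sub_norm_sub_sq hZ.ne', norm_neg, norm_smul,
    Real.norm_of_nonneg (by positivity)]
  exact mul_le_of_le_one_right (by positivity) hx.le

theorem cutoff_terms_le (hx : ‖x - c‖ < 1) (V : E) (a : ℝ) :
    (‖∇ (fun y => 2 * Real.log (1 - ‖y - c‖ ^ 2)) x‖ ^ 2
        - Δ (fun y => 2 * Real.log (1 - ‖y - c‖ ^ 2)) x) / 2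
        - a * ⟪∇ (fun y => 2 * Real.log (1 - ‖y - c‖ ^ 2)) x, V⟫
      ≤ (2 * Module.finrank ℝ E + 12 + 4 * |a|) *
        (((1 - ‖x - c‖ ^ 2) ^ 2)⁻¹ + √(((1 - ‖x - c‖ ^ 2) ^ 2)⁻¹ * ‖V‖ ^ 2)) := by
  have hgrad := norm_gradient_two_mul_log_one_sub_norm_sub_sq_le hx
  have hZ : 0 < 1 - ‖x - c‖ ^ 2 := sub_pos.2 (pow_lt_one₀ (norm_nonneg _) hx two_ne_zero)
  rw [laplacian_two_mul_log_one_sub_norm_sub_sq hZ.ne', ← norm_neg ((4 / _) • _),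
    ← gradient_two_mul_log_one_sub_norm_sub_sq hZ.ne', ← inv_pow, ← mul_pow,
    Real.sqrt_sq (by positivity)]
  set ξ := ∇ (fun y => 2 * Real.log (1 - ‖y - c‖ ^ 2)) x
  set y := (1 - ‖x - c‖ ^ 2)⁻¹ with hy_def
  have hy : 1 ≤ y := (one_le_inv₀ hZ).2 (sub_le_self _ (sq_nonneg _))
  rw [div_eq_mul_inv, ← hy_def] at hgrad
  rw [div_eq_mul_inv (4 * _), ← hy_def]
  have hinner : -a * ⟪ξ, V⟫ ≤ |a| * (4 * y * ‖V‖) :=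
    calc -a * ⟪ξ, V⟫ ≤ |a| * |⟪ξ, V⟫| := by
          rw [← abs_neg a, ← abs_mul]
          exact le_abs_self _
      _ ≤ |a| * (4 * y * ‖V‖) := by
          gcongr
          exact (abs_real_inner_le_norm ξ V).trans (by gcongr)
  have hsq : ‖ξ‖ ^ 2 ≤ (4 * y) ^ 2 := by gcongr
  have hn : (Module.finrank ℝ E : ℝ) * y ≤ Module.finrank ℝ E * y ^ 2 := by
    gcongr
    exact le_self_pow₀ hy two_ne_zero
  have hrest : 0 ≤ (2 * Module.finrank ℝ E + 12) * (y * ‖V‖) + 4 * |a| * y ^ 2 := by positivity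
  linarith

theorem exists_isLocalMax_add_two_mul_log {L : E → ℝ} (hL : ContinuousOn L (closedBall c 1)) :
    ∃ x ∈ ball c 1, IsLocalMax (L + fun y => 2 * Real.log (1 - ‖y - c‖ ^ 2)) x ∧
      L c ≤ L x + 2 * Real.log (1 - ‖x - c‖ ^ 2) := by
  let Φ (y : E) : ℝ := Real.exp (L y) * (1 - ‖y - c‖ ^ 2) ^ 2
  have hΦ : ContinuousOn Φ (closedBall c 1) := by fun_prop
  have hlog (y : E) (hy : y ∈ ball c 1) :
      0 < Φ y ∧ Real.log (Φ y) = L y + 2 * Real.log (1 - ‖y - c‖ ^ 2) := by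
    rw [mem_ball, dist_eq_norm] at hy
    have hZ : 0 < 1 - ‖y - c‖ ^ 2 := sub_pos.2 (pow_lt_one₀ (norm_nonneg _) hy two_ne_zero)
    refine ⟨by positivity, ?_⟩
    rw [Real.log_mul (Real.exp_ne_zero _) (by positivity), Real.log_exp, Real.log_pow,
      Nat.cast_ofNat]
  have hc : c ∈ ball c 1 := mem_ball_self one_pos
  obtain ⟨x, hx, hmax⟩ := (isCompact_closedBall c 1).exists_isMaxOn
    ⟨c, ball_subset_closedBall hc⟩ hΦ
  have hxball : x ∈ ball c 1 := by
    refine mem_ball.2 ((mem_closedBall.1 hx).lt_of_ne fun h => ?_)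
    have hΦx : Φ x = 0 := by simp [Φ, ← dist_eq_norm, h]
    exact ((hlog c hc).1.trans_le (hmax (ball_subset_closedBall hc))).ne' hΦx
  have hle (y : E) (hy : y ∈ ball c 1) :
      L y + 2 * Real.log (1 - ‖y - c‖ ^ 2) ≤ L x + 2 * Real.log (1 - ‖x - c‖ ^ 2) := by
    rw [← (hlog y hy).2, ← (hlog x hxball).2]
    exact Real.log_le_log (hlog y hy).1 (hmax (ball_subset_closedBall hy))
  exact ⟨x, hxball, by filter_upwards [isOpen_ball.mem_nhds hxball] using hle,
    by simpa using hle c hc⟩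

theorem exists_isLocalMax_log_add_smul_log {v Q : E → ℝ} (γ : ℝ)
    (hv : ContinuousOn v (closedBall c 1)) (hv_pos : ∀ y ∈ closedBall c 1, 0 < v y)
    (hQ : ContinuousOn Q (closedBall c 1)) (hQ_pos : ∀ y ∈ closedBall c 1, 0 < Q y) :
    ∃ x ∈ ball c 1,
      IsLocalMax ((fun y => Real.log (Q y)) +
        ((γ • fun y => Real.log (v y)) + fun y => 2 * Real.log (1 - ‖y - c‖ ^ 2))) x ∧
      v c ^ γ * Q c ≤ v x ^ γ * Q x * (1 - ‖x - c‖ ^ 2) ^ 2 := by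
  have hcont : ContinuousOn ((fun y => Real.log (Q y)) + γ • fun y => Real.log (v y))
      (closedBall c 1) :=
    (hQ.log fun y hy => (hQ_pos y hy).ne').add
      ((hv.log fun y hy => (hv_pos y hy).ne').const_smul γ)
  obtain ⟨x, hx, hmax, hle⟩ := exists_isLocalMax_add_two_mul_log hcont
  refine ⟨x, hx, by rwa [add_assoc] at hmax, ?_⟩
  have hpos (y : E) (hy : y ∈ closedBall c 1) : 0 < v y ^ γ * Q y :=
    mul_pos (Real.rpow_pos_of_pos (hv_pos y hy) γ) (hQ_pos y hy)
  have hlog (y : E) (hy : y ∈ closedBall c 1) : Real.log (v y ^ γ * Q y) =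
      ((fun y => Real.log (Q y)) + γ • fun y => Real.log (v y)) y := by
    rw [Real.log_mul (Real.rpow_pos_of_pos (hv_pos y hy) γ).ne' (hQ_pos y hy).ne',
      Real.log_rpow (hv_pos y hy), add_comm]
    rfl
  have hc : c ∈ closedBall c 1 := mem_closedBall_self zero_le_one
  have hx' := ball_subset_closedBall hx
  rw [mem_ball, dist_eq_norm] at hx
  have hZ : 0 < (1 - ‖x - c‖ ^ 2) ^ 2 :=
    pow_pos (sub_pos.2 (pow_lt_one₀ (norm_nonneg _) hx two_ne_zero)) 2
  refine (Real.log_le_log_iff (hpos c hc) (mul_pos (hpos x hx') hZ)).1 ?_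
  rwa [Real.log_mul (hpos x hx').ne' hZ.ne', hlog c hc, hlog x hx', Real.log_pow]

end Cutoff

section PowerPerturbation

theorem exists_add_rpow_le {s θ : ℝ} (hs : 0 < s) (hθ : 0 < θ) :
    ∃ K, 0 ≤ K ∧ ∀ u δ : ℝ, 0 ≤ u → 0 ≤ δ → δ ≤ 1 → (u + δ) ^ s ≤ u ^ s + (θ * u ^ s + K) := by
  set τ := (1 + θ) ^ s⁻¹ - 1 with hτ_def
  have hτ : 0 < τ := sub_pos.2 (Real.one_lt_rpow (by linarith) (inv_pos.2 hs))
  have hτs : (1 + τ) ^ s = 1 + θ := by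
    rw [hτ_def, add_sub_cancel, Real.rpow_inv_rpow (by positivity) hs.ne']
  refine ⟨(τ⁻¹ + 1) ^ s, by positivity, fun u δ hu hδ hδ1 => ?_⟩
  rcases le_total δ (τ * u) with h | h
  · calc (u + δ) ^ s ≤ ((1 + τ) * u) ^ s := by gcongr; linarith
      _ = u ^ s + θ * u ^ s := by rw [Real.mul_rpow (by positivity) hu, hτs]; ring
      _ ≤ u ^ s + (θ * u ^ s + (τ⁻¹ + 1) ^ s) := by
        gcongr
        exact le_add_of_nonneg_right (by positivity)
  · have huτ : u ≤ τ⁻¹ := by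
      rw [← one_div, le_div_iff₀ hτ]
      linarith
    calc (u + δ) ^ s ≤ (τ⁻¹ + 1) ^ s := by gcongr
      _ ≤ u ^ s + (θ * u ^ s + (τ⁻¹ + 1) ^ s) := by
        have : 0 ≤ u ^ s + θ * u ^ s := by positivity
        linarith

theorem rpow_le_mul_div_add {s θ u δ : ℝ} (hs : 0 < s) (hθ : 0 < θ) (hu : 0 ≤ u) (hδ : 0 < δ)
    (hδ1 : δ ≤ 1) : u ^ s ≤ u ^ s * u / (u + δ) + (θ * u ^ s + θ⁻¹ ^ s) := by
  have hsplit : u ^ s = u ^ s * u / (u + δ) + δ / (u + δ) * u ^ s := by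
    field_simp
  have hus : 0 ≤ u ^ s := by positivity
  have hθs : 0 ≤ θ⁻¹ ^ s := by positivity
  rcases le_total θ⁻¹ u with h | h
  · have : δ / (u + δ) ≤ θ := by
      rw [div_le_iff₀ (by positivity)]
      have := (inv_le_iff_one_le_mul₀' hθ).1 h
      nlinarith
    nlinarith
  · have : u ^ s ≤ θ⁻¹ ^ s := by gcongr
    have : 0 ≤ u ^ s * u / (u + δ) + θ * u ^ s := by positivity
    linarith

end PowerPerturbation

section LaneEmden

variable {E : Type*} [NormedAddCommGroup E] [InnerProductSpace ℝ E] [FiniteDimensional ℝ E]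

/-- The Lane-Emden problem: `u` is a smooth nonnegative solution of `-Δu = u ^ p` on `Ω`. -/
structure IsLaneEmdenSolution (p : ℝ) (u : E → ℝ) (Ω : Set E) : Prop where
  contDiffOn : ContDiffOn ℝ ∞ u Ω
  nonneg : ∀ x ∈ Ω, 0 ≤ u x
  neg_laplacian_eq : ∀ x ∈ Ω, -Δ u x = u x ^ p

variable {p δ : ℝ} {u : E → ℝ} {Ω : Set E} {c x : E}

theorem IsLaneEmdenSolution.contDiffAt (hu : IsLaneEmdenSolution p u Ω) (hΩ : IsOpen Ω)
    (hx : x ∈ Ω) (n : ℕ) : ContDiffAt ℝ n u x :=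
  contDiffAt_infty.1 (hu.contDiffOn.contDiffAt (hΩ.mem_nhds hx)) n

theorem IsLaneEmdenSolution.contDiffAt_log_add (hu : IsLaneEmdenSolution p u Ω) (hΩ : IsOpen Ω)
    (hδ : 0 < δ) (hx : x ∈ Ω) (n : ℕ) : ContDiffAt ℝ n (fun y => Real.log (u y + δ)) x :=
  ((hu.contDiffAt hΩ hx n).add contDiffAt_const).log
    (add_pos_of_nonneg_of_pos (hu.nonneg x hx) hδ).ne'

theorem IsLaneEmdenSolution.gradient_log_add (hu : IsLaneEmdenSolution p u Ω) (hΩ : IsOpen Ω)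
    (hδ : 0 < δ) (hx : x ∈ Ω) :
    ∇ (fun y => Real.log (u y + δ)) x = (u x + δ)⁻¹ • ∇ u x := by
  have h1 : ContDiffAt ℝ 1 u x := hu.contDiffAt hΩ hx 1
  rw [gradient_log ((h1.differentiableAt one_ne_zero).add_const δ)
    (add_pos_of_nonneg_of_pos (hu.nonneg x hx) hδ).ne']
  simp only [gradient, fderiv_add_const]

theorem IsLaneEmdenSolution.laplacian_log_add (hu : IsLaneEmdenSolution p u Ω) (hΩ : IsOpen Ω)
    (hδ : 0 < δ) (hx : x ∈ Ω) :
    Δ (fun y => Real.log (u y + δ)) x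
      = -(u x ^ p / (u x + δ)) - ‖∇ (fun y => Real.log (u y + δ)) x‖ ^ 2 := by
  have hu2 : ContDiffAt ℝ 2 u x := hu.contDiffAt hΩ hx 2
  have hadd : Δ (fun y => u y + δ) x = -u x ^ p := by
    have hconst : Δ (fun _ : E => δ) x = 0 := by
      simp [laplacian_eq_sum_fderiv_fderiv (stdOrthonormalBasis ℝ E)]
    rw [← hu.neg_laplacian_eq x hx, neg_neg]
    exact (hu2.laplacian_add contDiffAt_const).trans (by rw [hconst, add_zero])
  rw [laplacian_log (hu2.add contDiffAt_const) (add_pos_of_nonneg_of_pos (hu.nonneg x hx) hδ).ne',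
    hadd, neg_div]

theorem hasDerivAt_exp_sub_rpow_div_exp (hp : 1 ≤ p) (δ t : ℝ) :
    HasDerivAt (fun t => (Real.exp t - δ) ^ p / Real.exp t)
      (p * (Real.exp t - δ) ^ (p - 1) - (Real.exp t - δ) ^ p / Real.exp t) t := by
  have h := (((Real.hasDerivAt_exp t).sub_const δ).rpow_const (.inr hp)).div
    (Real.hasDerivAt_exp t) (Real.exp_ne_zero t)
  refine h.congr_deriv ?_
  field_simp

theorem bernsteinQuantity_pos {s d : ℝ} (hd : 0 < d) (w : E → ℝ) (x : E) :
    0 < bernsteinQuantity s d w x :=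
  add_pos_of_nonneg_of_pos (sq_nonneg _) (mul_pos hd (Real.exp_pos _))

theorem IsLaneEmdenSolution.bernstein_inequality {γ d F G U g : ℝ} {w : E → ℝ}
    (hu : IsLaneEmdenSolution p u Ω) (hΩ : IsOpen Ω) (hp : 1 ≤ p) (hδ : 0 < δ) (hd : 0 < d)
    (α : ℝ) (hxΩ : x ∈ Ω) (hxc : ‖x - c‖ < 1) (hw : w = fun y => Real.log (u y + δ))
    (hmax : IsLocalMax ((fun y => Real.log (bernsteinQuantity (p - 1) d w y)) +
      (γ • w + fun y => 2 * Real.log (1 - ‖y - c‖ ^ 2))) x)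
    (hF : ‖∇ w x‖ ^ 2 = F) (hG : (u x + δ) ^ (p - 1) = G) (hU : u x ^ (p - 1) = U)
    (hg : u x ^ p / (u x + δ) = g) :
    ((1 - α) * γ - α ^ 2 + (1 + α) ^ 2 / Module.finrank ℝ E - γ ^ 2 / 2 - γ / 2) * F ^ 2
        + F * (((1 - α) * (d * (γ + (p - 1))) + d * (γ + (p - 1)) * (p - 2 - γ) / 2) * G
          + (2 * (1 + α) / Module.finrank ℝ E + 1 - γ / 2) * g - p * U)
        + 1 / Module.finrank ℝ E * g ^ 2 - d * (γ + (p - 1)) / 2 * g * G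
      ≤ (F + d * G) * ((2 * Module.finrank ℝ E + 12 + 4 * |1 - α - γ|) *
        (((1 - ‖x - c‖ ^ 2) ^ 2)⁻¹ + √(((1 - ‖x - c‖ ^ 2) ^ 2)⁻¹ * F))) := by
  have hZ : 0 < 1 - ‖x - c‖ ^ 2 := sub_pos.2 (pow_lt_one₀ (norm_nonneg _) hxc two_ne_zero)
  have hv (y : E) (hy : y ∈ Ω) : 0 < u y + δ := add_pos_of_nonneg_of_pos (hu.nonneg y hy) hδ
  have hexp (y : E) (hy : y ∈ Ω) : Real.exp (w y) = u y + δ := by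
    rw [hw, Real.exp_log (hv y hy)]
  have hGw : Real.exp ((p - 1) * w x) = G := by
    rw [← hG, Real.rpow_def_of_pos (hv x hxΩ), mul_comm, hw]
  have hΔ : Δ w =ᶠ[𝓝 x] fun y =>
      -((Real.exp (w y) - δ) ^ p / Real.exp (w y)) - ‖∇ w y‖ ^ 2 := by
    filter_upwards [hΩ.mem_nhds hxΩ] with y hy
    rw [hexp y hy, add_sub_cancel_right, hw, hu.laplacian_log_add hΩ hδ hy]
  have hψ := hasDerivAt_exp_sub_rpow_div_exp hp δ (w x)
  rw [hexp x hxΩ, add_sub_cancel_right, hU, hg] at hψ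
  have hmain := bernstein_inequality_of_isLocalMax (g := g) α
    (by rw [hw]; exact hu.contDiffAt_log_add hΩ hδ hxΩ 3)
    (contDiffAt_two_mul_log_one_sub_norm_sub_sq hZ.ne') hΔ hψ (bernsteinQuantity_pos hd w x) hmax
    hF hGw (by rw [hexp x hxΩ, add_sub_cancel_right, hg])
  have hcutoff := cutoff_terms_le hxc (∇ w x) (1 - α - γ)
  rw [hF] at hcutoff
  have hQ : 0 ≤ F + d * G := by
    rw [← hF, ← hG]
    have := hv x hxΩ
    positivity
  linarith [mul_le_mul_of_nonneg_left hcutoff hQ]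

theorem exists_bernsteinQuantity_le_of_isLocalMax {γ α e : ℝ} (hp : 1 < p)
    (ht : IsBernsteinTriple (Module.finrank ℝ E) p γ α e) :
    ∃ C, ∀ (u w : E → ℝ) (Ω : Set E) (c x : E) (δ : ℝ), IsLaneEmdenSolution p u Ω → IsOpen Ω →
      0 < δ → δ ≤ 1 → x ∈ Ω → ‖x - c‖ < 1 → (w = fun y => Real.log (u y + δ)) →
      IsLocalMax ((fun y => Real.log (bernsteinQuantity (p - 1) (e / (γ + (p - 1))) w y)) +
        (γ • w + fun y => 2 * Real.log (1 - ‖y - c‖ ^ 2))) x →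
      bernsteinQuantity (p - 1) (e / (γ + (p - 1))) w x * (1 - ‖x - c‖ ^ 2) ^ 2 ≤ C := by
  set d := e / (γ + (p - 1))
  have hd : 0 < d := div_pos ht.pos ht.weight_add_pos
  have hde : d * (γ + (p - 1)) = e := div_mul_cancel₀ e ht.weight_add_pos.ne'
  have hs : 0 < p - 1 := sub_pos.2 hp
  obtain ⟨θ, hθ, hquad⟩ := exists_le_mul_of_quadratic_le ht.gradient_coeff_pos
    ht.mixed_coeff_pos.le (half_pos ht.pos).le ht.source_coeff_pos hd.le
    (A := 2 * Module.finrank ℝ E + 12 + 4 * |1 - α - γ|) (by positivity)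
  obtain ⟨K, hK, hKu⟩ := exists_add_rpow_le hs hθ
  obtain ⟨C, hC⟩ := hquad (K + θ⁻¹ ^ (p - 1)) (by positivity)
  refine ⟨C, fun u w Ω c x δ hu hΩ hδ hδ1 hxΩ hxc hw hmax => ?_⟩
  have hZ : 0 < 1 - ‖x - c‖ ^ 2 := sub_pos.2 (pow_lt_one₀ (norm_nonneg _) hxc two_ne_zero)
  have hux := hu.nonneg x hxΩ
  have hθs : 0 ≤ θ⁻¹ ^ (p - 1) := by positivity
  have hg : u x ^ p / (u x + δ) = u x ^ (p - 1) * u x / (u x + δ) := by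
    rw [← Real.rpow_add_one' hux (by linarith), sub_add_cancel]
  have hmain := hu.bernstein_inequality hΩ hp.le hδ hd α hxΩ hxc hw hmax rfl rfl rfl hg
  rw [hde] at hmain
  have hQ := hC _ _ _ _ (((1 - ‖x - c‖ ^ 2) ^ 2)⁻¹) (sq_nonneg _) (by positivity)
    (div_le_of_le_mul₀ (by positivity) (by positivity) (by gcongr; linarith)) (by gcongr; linarith)
    ((hKu (u x) δ hux hδ.le hδ1).trans (by linarith))
    ((rpow_le_mul_div_add hs hθ hux hδ hδ1).trans (by linarith))
    ((one_le_inv₀ (by positivity)).2 (pow_le_one₀ hZ.le (sub_le_self _ (sq_nonneg _)))) hmain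
  rw [← div_eq_mul_inv, le_div_iff₀ (by positivity)] at hQ
  rwa [bernsteinQuantity, hw, mul_comm (p - 1), ← Real.rpow_def_of_pos (by positivity), ← hw]

end LaneEmden

section PointwiseEstimate

variable {E : Type*} [NormedAddCommGroup E] [InnerProductSpace ℝ E] [FiniteDimensional ℝ E] {p : ℝ}

theorem exists_rpow_mul_bernsteinQuantity_le {γ α e : ℝ} (hp : 1 < p)
    (ht : IsBernsteinTriple (Module.finrank ℝ E) p γ α e) :
    ∃ C, ∀ (u w : E → ℝ) (Ω : Set E) (c : E) (δ : ℝ), IsLaneEmdenSolution p u Ω → IsOpen Ω →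
      closedBall c 1 ⊆ Ω → 0 < δ → δ ≤ 1 → (w = fun y => Real.log (u y + δ)) →
      (u c + δ) ^ γ * bernsteinQuantity (p - 1) (e / (γ + (p - 1))) w c ≤ C * δ ^ γ := by
  obtain ⟨C, hC⟩ := exists_bernsteinQuantity_le_of_isLocalMax hp ht
  set d := e / (γ + (p - 1))
  refine ⟨C, fun u w Ω c δ hu hΩ hball hδ hδ1 hw => ?_⟩
  set Q := bernsteinQuantity (p - 1) d w
  have hQ : ∀ y, 0 < Q y := bernsteinQuantity_pos (div_pos ht.pos ht.weight_add_pos) w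
  have hv (y : E) (hy : y ∈ Ω) : 0 < u y + δ := add_pos_of_nonneg_of_pos (hu.nonneg y hy) hδ
  obtain ⟨x, hx, hmax, hle⟩ := exists_isLocalMax_log_add_smul_log (v := fun y => u y + δ) (Q := Q) γ
    ((hu.contDiffOn.continuousOn.mono hball).add continuousOn_const) (fun y hy => hv y (hball hy))
    (fun y hy => (contDiffAt_bernsteinQuantity
      (hw ▸ hu.contDiffAt_log_add hΩ hδ (hball hy) 3)).continuousAt.continuousWithinAt)
    fun y _ => hQ y
  have hxΩ := hball (ball_subset_closedBall hx)
  rw [mem_ball, dist_eq_norm] at hx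
  rw [← hw] at hmax
  have hbound := hC u w Ω c x δ hu hΩ hδ hδ1 hxΩ hx hw hmax
  calc (u c + δ) ^ γ * Q c ≤ (u x + δ) ^ γ * (Q x * (1 - ‖x - c‖ ^ 2) ^ 2) := by
        rwa [mul_assoc] at hle
    _ ≤ (u x + δ) ^ γ * C :=
        mul_le_mul_of_nonneg_left hbound (Real.rpow_nonneg (hv x hxΩ).le γ)
    _ ≤ C * δ ^ γ := by
        rw [mul_comm]
        refine mul_le_mul_of_nonneg_left ?_ (hbound.trans' (mul_nonneg (hQ x).le (sq_nonneg _)))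
        exact Real.rpow_le_rpow_of_nonpos hδ (le_add_of_nonneg_left (hu.nonneg x hxΩ))
          ht.weight_neg.le

theorem norm_gradient (f : E → ℝ) (x : E) : ‖∇ f x‖ = ‖fderiv ℝ f x‖ :=
  (InnerProductSpace.toDual ℝ E).symm.norm_map _

theorem exists_rpow_mul_norm_fderiv_sq_add_le (hn : 1 ≤ Module.finrank ℝ E) (hp : 1 < p)
    (hsub : ((Module.finrank ℝ E : ℝ) - 2) * p < Module.finrank ℝ E + 2) :
    ∃ γ d C : ℝ, 0 < γ + (p - 1) ∧ 0 < d ∧ ∀ (u : E → ℝ) (Ω : Set E) (c : E) (δ : ℝ),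
      IsLaneEmdenSolution p u Ω → IsOpen Ω → closedBall c 1 ⊆ Ω → 0 < δ → δ ≤ 1 →
      (u c + δ) ^ γ * ((‖fderiv ℝ u c‖ / (u c + δ)) ^ 2 + d * (u c + δ) ^ (p - 1))
        ≤ C * δ ^ γ := by
  obtain ⟨γ, α, e, ht⟩ := exists_isBernsteinTriple (by exact_mod_cast hn) hp hsub
  obtain ⟨C, hC⟩ := exists_rpow_mul_bernsteinQuantity_le hp ht
  refine ⟨γ, e / (γ + (p - 1)), C, ht.weight_add_pos,
    div_pos ht.pos ht.weight_add_pos, fun u Ω c δ hu hΩ hball hδ hδ1 => ?_⟩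
  have hcΩ := hball (mem_closedBall_self zero_le_one)
  have hv : 0 < u c + δ := add_pos_of_nonneg_of_pos (hu.nonneg c hcΩ) hδ
  have h := hC u _ Ω c δ hu hΩ hball hδ hδ1 rfl
  rwa [bernsteinQuantity, hu.gradient_log_add hΩ hδ hcΩ, norm_smul, norm_gradient, norm_inv,
    Real.norm_of_nonneg hv.le, inv_mul_eq_div, mul_comm (p - 1), ← Real.rpow_def_of_pos hv] at h

theorem le_mul_of_rpow_mul_div_sq_le {γ C M a G δ : ℝ} (hM : 0 < M) (hδ : 0 < δ) (ha : a = M * δ)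
    (h : (a + δ) ^ γ * (G / (a + δ)) ^ 2 ≤ C * δ ^ γ) :
    G ≤ √(C * (M + 1) ^ (-γ)) * (1 + M⁻¹) * a := by
  have hM1 : 0 < M + 1 := by linarith
  have hv : a + δ = (M + 1) * δ := by rw [ha]; ring
  have hsq : (G / (a + δ)) ^ 2 ≤ C * (M + 1) ^ (-γ) := by
    rw [hv, Real.mul_rpow hM1.le hδ.le] at h
    rw [hv, Real.rpow_neg hM1.le, ← div_eq_mul_inv, le_div_iff₀ (Real.rpow_pos_of_pos hM1 γ)]
    exact le_of_mul_le_mul_right (by linarith) (Real.rpow_pos_of_pos hδ γ)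
  calc G ≤ √(C * (M + 1) ^ (-γ)) * (a + δ) :=
        (div_le_iff₀ (hv ▸ mul_pos hM1 hδ)).1 (Real.le_sqrt_of_sq_le hsq)
    _ = √(C * (M + 1) ^ (-γ)) * (1 + M⁻¹) * a := by rw [hv, ha]; field_simp

theorem le_rpow_inv_of_rpow_mul_add_le {γ s d C v X : ℝ} (hγs : 0 < γ + s) (hd : 0 < d)
    (hv : 0 < v) (h : v ^ γ * (X ^ 2 + d * v ^ s) ≤ C) : v ≤ (C / d) ^ (γ + s)⁻¹ := by
  have hpow : v ^ (γ + s) ≤ C / d := by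
    have : 0 ≤ v ^ γ * X ^ 2 := by positivity
    rw [le_div_iff₀ hd, Real.rpow_add hv]
    linarith
  exact (Real.le_rpow_inv_iff_of_pos hv.le ((Real.rpow_nonneg hv.le _).trans hpow) hγs).2 hpow

/- The weight `γ` is negative, so `δ = 1` bounds `u c`; then `δ` of the order of `u c` bounds the
logarithmic derivative. -/
theorem exists_le_and_norm_fderiv_le (hn : 1 ≤ Module.finrank ℝ E) (hp : 1 < p)
    (hsub : ((Module.finrank ℝ E : ℝ) - 2) * p < Module.finrank ℝ E + 2) :
    ∃ M, ∀ (u : E → ℝ) (Ω : Set E) (c : E), IsLaneEmdenSolution p u Ω → IsOpen Ω →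
      closedBall c 1 ⊆ Ω → u c ≤ M ∧ ‖fderiv ℝ u c‖ ≤ M * u c := by
  obtain ⟨γ, d, C, hγs, hd, hC⟩ := exists_rpow_mul_norm_fderiv_sq_add_le hn hp hsub
  set M₁ := max 1 ((C / d) ^ (γ + (p - 1))⁻¹)
  have hM₁ : 0 < M₁ := zero_lt_one.trans_le (le_max_left _ _)
  set M₂ := √(C * (M₁ + 1) ^ (-γ)) * (1 + M₁⁻¹)
  refine ⟨max M₁ M₂, fun u Ω c hu hΩ hball => ?_⟩
  have hcΩ := hball (mem_closedBall_self zero_le_one)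
  have huc := hu.nonneg c hcΩ
  have hle : u c ≤ M₁ := by
    have h := hC u Ω c 1 hu hΩ hball one_pos le_rfl
    rw [Real.one_rpow, mul_one] at h
    have := le_rpow_inv_of_rpow_mul_add_le hγs hd (by linarith) h
    exact (le_add_of_nonneg_right zero_le_one).trans (this.trans (le_max_right _ _))
  refine ⟨hle.trans (le_max_left _ _), ?_⟩
  rcases huc.eq_or_lt with h0 | hpos
  · have hmin : IsLocalMin u c := by
      filter_upwards [hΩ.mem_nhds hcΩ] with y hy
      exact h0 ▸ hu.nonneg y hy
    rw [hmin.fderiv_eq_zero, norm_zero, ← h0, mul_zero]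
  · have hδ : 0 < u c / M₁ := div_pos hpos hM₁
    have h := hC u Ω c _ hu hΩ hball hδ ((div_le_one hM₁).2 hle)
    have hdrop : 0 ≤ (u c + u c / M₁) ^ γ * (d * (u c + u c / M₁) ^ (p - 1)) := by positivity
    rw [mul_add] at h
    exact (le_mul_of_rpow_mul_div_sq_le hM₁ hδ (by field_simp) (by linarith)).trans
      (mul_le_mul_of_nonneg_right (le_max_right _ _) huc)

end PointwiseEstimate

section UnitScale

variable {E : Type*} [NormedAddCommGroup E] [InnerProductSpace ℝ E] [FiniteDimensional ℝ E]
  {p : ℝ} {u : E → ℝ} {Ω : Set E}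

theorem IsLaneEmdenSolution.le_exp_mul (hu : IsLaneEmdenSolution p u Ω) (hΩ : IsOpen Ω)
    {c : E} {M R : ℝ} (hball : ball c R ⊆ Ω) (hM₀ : 0 ≤ M)
    (hM : ∀ z ∈ ball c R, ‖fderiv ℝ u z‖ ≤ M * u z) {y : E} (hy : y ∈ ball c R) :
    u y ≤ Real.exp (M * R) * u c ∧ u c ≤ Real.exp (M * R) * u y := by
  have hR : 0 < R := dist_nonneg.trans_lt hy
  have hyc : ‖y - c‖ ≤ R := by simpa only [mem_ball, dist_eq_norm] using (mem_ball.1 hy).le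
  have hnorm (z : E) (hz : z ∈ ball c R) : ‖u z‖ = u z :=
    Real.norm_of_nonneg (hu.nonneg z (hball hz))
  have hdiff (z : E) (hz : z ∈ ball c R) : DifferentiableAt ℝ u z :=
    (hu.contDiffAt hΩ (hball hz) 1).differentiableAt one_ne_zero
  have key (x y : E) (hx : x ∈ ball c R) (hy : y ∈ ball c R) (hxy : ‖y - x‖ ≤ R) :
      u y ≤ Real.exp (M * R) * u x := by
    have h := norm_le_exp_mul_norm_of_norm_fderiv_le (convex_ball c R) hdiff
      (fun z hz => (hM z hz).trans_eq (by rw [hnorm z hz])) hx hy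
    rw [hnorm x hx, hnorm y hy] at h
    refine h.trans (mul_le_mul_of_nonneg_right ?_ (hu.nonneg x (hball hx)))
    gcongr
  have hc : c ∈ ball c R := mem_ball_self hR
  exact ⟨key c y hc hy hyc, key y c hy hc (by rwa [norm_sub_rev])⟩

theorem IsLaneEmdenSolution.laplacian_inv_smul (hu : IsLaneEmdenSolution p u Ω) (hΩ : IsOpen Ω)
    {a : ℝ} (ha : 0 < a) {y : E} (hy : y ∈ Ω) :
    Δ (a⁻¹ • u) y = -a ^ (p - 1) • ((a⁻¹ • u) y) ^ p := by
  rw [InnerProductSpace.laplacian_smul _ (hu.contDiffAt hΩ hy 2), ← neg_neg (Δ u y),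
    hu.neg_laplacian_eq y hy]
  simp only [Pi.smul_apply, smul_eq_mul]
  rw [Real.mul_rpow (inv_nonneg.2 ha.le) (hu.nonneg y hy), Real.rpow_sub_one ha.ne',
    Real.inv_rpow ha.le]
  have := (Real.rpow_pos_of_pos ha p).ne'
  field_simp

theorem exists_norm_iteratedFDeriv_le_mul_of_le_mul (hp : 1 ≤ p) (M : ℝ) {H : ℝ} (hH : 0 < H)
    (s : ℕ) :
    ∃ B : ℝ, ∀ (u : E → ℝ) (Ω : Set E) (c : E), IsLaneEmdenSolution p u Ω → IsOpen Ω →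
      closedBall c s ⊆ Ω → u c ≤ M → (∀ y ∈ Ω, u y ≤ H * u c ∧ u c ≤ H * u y) →
      ∀ k ≤ s, ‖iteratedFDeriv ℝ k u c‖ ≤ B * u c := by
  obtain ⟨B, hB⟩ := exists_norm_iteratedFDeriv_le_of_laplacian_eq (E := E)
    (f := fun t : ℝ => t ^ p) isOpen_Ioi (isCompact_Icc (a := H⁻¹) (b := H))
    (fun t ht => (inv_pos.2 hH).trans_le ht.1)
    (fun t ht => (Real.contDiffAt_rpow_const_of_ne (ne_of_gt ht)).contDiffWithinAt)
    (M ^ (p - 1)) s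
  refine ⟨B, fun u Ω c hu hΩ hball hM harnack k hk => ?_⟩
  have hcΩ : c ∈ Ω := hball (mem_closedBall_self (by positivity))
  rcases (hu.nonneg c hcΩ).eq_or_lt with h0 | hpos
  · have hzero : u =ᶠ[𝓝 c] 0 := by
      filter_upwards [hΩ.mem_nhds hcΩ] with y hy
      have := (harnack y hy).1
      rw [← h0, mul_zero] at this
      exact le_antisymm this (hu.nonneg y hy)
    rw [(hzero.iteratedFDeriv ℝ k).eq_of_nhds, Pi.zero_def, iteratedFDeriv_fun_zero, ← h0,
      Pi.zero_apply, norm_zero, mul_zero]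
  have hbound : ‖iteratedFDeriv ℝ k ((u c)⁻¹ • u) c‖ ≤ B := by
    refine hB (-u c ^ (p - 1)) Ω ((u c)⁻¹ • u) ?_ hΩ (contDiffOn_const.smul hu.contDiffOn)
      (fun y hy => ?_) (fun y hy => hu.laplacian_inv_smul hΩ hpos hy) c hball k hk
    · rw [abs_neg, abs_of_nonneg (by positivity)]
      exact Real.rpow_le_rpow hpos.le hM (sub_nonneg.2 hp)
    · obtain ⟨h₁, h₂⟩ := harnack y hy
      simp only [Pi.smul_apply, smul_eq_mul, mem_Icc]
      rw [inv_mul_eq_div, le_div_iff₀ hpos, div_le_iff₀ hpos, inv_mul_le_iff₀ hH]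
      exact ⟨h₂, h₁⟩
  rwa [iteratedFDeriv_const_smul_apply (hu.contDiffAt hΩ hcΩ k), norm_smul, norm_inv,
    Real.norm_of_nonneg hpos.le, inv_mul_le_iff₀' hpos] at hbound

theorem IsLaneEmdenSolution.mono {Ω' : Set E} (hu : IsLaneEmdenSolution p u Ω) (h : Ω' ⊆ Ω) :
    IsLaneEmdenSolution p u Ω' :=
  ⟨hu.contDiffOn.mono h, fun x hx => hu.nonneg x (h hx), fun x hx => hu.neg_laplacian_eq x (h hx)⟩

theorem exists_norm_iteratedFDeriv_le_of_closedBall_subset (hn : 1 ≤ Module.finrank ℝ E)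
    (hp : 1 < p) (hsub : ((Module.finrank ℝ E : ℝ) - 2) * p < Module.finrank ℝ E + 2) (s : ℕ) :
    ∃ B : ℝ, ∀ (u : E → ℝ) (Ω : Set E) (c : E), IsLaneEmdenSolution p u Ω → IsOpen Ω →
      closedBall c (s + 2) ⊆ Ω → ∀ k ≤ s, ‖iteratedFDeriv ℝ k u c‖ ≤ B := by
  obtain ⟨M, hM⟩ := exists_le_and_norm_fderiv_le (E := E) hn hp hsub
  obtain ⟨B, hB⟩ := exists_norm_iteratedFDeriv_le_mul_of_le_mul (E := E) hp.le M
    (Real.exp_pos (M * (s + 1))) s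
  refine ⟨max B 0 * M, fun u Ω c hu hΩ hball k hk => ?_⟩
  have hunit (z : E) (hz : z ∈ ball c (s + 1)) : u z ≤ M ∧ ‖fderiv ℝ u z‖ ≤ M * u z := by
    refine hM u Ω z hu hΩ ((closedBall_subset_closedBall' ?_).trans hball)
    linarith [mem_ball.1 hz]
  have hsubset : ball c (s + 1) ⊆ Ω :=
    (ball_subset_closedBall.trans (closedBall_subset_closedBall (by linarith))).trans hball
  have hc : c ∈ ball c ((s : ℝ) + 1) := mem_ball_self (by positivity)
  have huc : 0 ≤ u c := hu.nonneg c (hsubset hc)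
  have hbound := hB u (ball c (s + 1)) c (hu.mono hsubset) isOpen_ball
    (closedBall_subset_ball (by linarith)) (hunit c hc).1
    (fun y hy => hu.le_exp_mul hΩ hsubset (huc.trans (hunit c hc).1)
      (fun z hz => (hunit z hz).2) hy) k hk
  exact hbound.trans (mul_le_mul (le_max_left B 0) (hunit c hc).1 huc (le_max_right B 0))

end UnitScale

section Scaling

theorem iteratedFDeriv_comp_add_smul {𝕜 V W : Type*} [NontriviallyNormedField 𝕜]
    [NormedAddCommGroup V] [NormedSpace 𝕜 V] [NormedAddCommGroup W] [NormedSpace 𝕜 W]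
    (f : V → W) (x : V) {ρ : 𝕜} (hρ : ρ ≠ 0) (k : ℕ) (y : V) :
    iteratedFDeriv 𝕜 k (fun z => f (x + ρ • z)) y = ρ ^ k • iteratedFDeriv 𝕜 k f (x + ρ • y) := by
  have h := (ContinuousLinearEquiv.smulLeft (M₁ := V) (R₁ := 𝕜)
    (Units.mk0 ρ hρ)).iteratedFDerivWithin_comp_right
    (fun z => f (x + z)) uniqueDiffOn_univ (mem_univ _) k (x := y)
  simp only [preimage_univ, iteratedFDerivWithin_univ, iteratedFDeriv_comp_add_left] at h
  refine h.trans ?_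
  ext m
  exact ((iteratedFDeriv 𝕜 k f (x + ρ • y)).map_smul_univ (fun _ => ρ) m).trans (by simp)

theorem norm_iteratedFDeriv_rpow_smul_comp_add_smul {V : Type*} [NormedAddCommGroup V]
    [NormedSpace ℝ V] {u : V → ℝ} {q ρ : ℝ} (hρ : 0 < ρ) {k : ℕ} {x : V}
    (hu : ContDiffAt ℝ k u x) :
    ‖iteratedFDeriv ℝ k (ρ ^ q • fun y => u (x + ρ • y)) 0‖
      = ρ ^ (q + k) * ‖iteratedFDeriv ℝ k u x‖ := by
  have hcomp : ContDiffAt ℝ k (fun y => u (x + ρ • y)) 0 :=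
    ContDiffAt.comp 0 (by simpa using hu) (by fun_prop)
  rw [iteratedFDeriv_const_smul_apply hcomp, iteratedFDeriv_comp_add_smul u x hρ.ne', smul_zero,
    add_zero, norm_smul, norm_smul, norm_pow, Real.norm_of_nonneg hρ.le,
    Real.norm_of_nonneg (Real.rpow_nonneg hρ.le q), Real.rpow_add hρ, Real.rpow_natCast, mul_assoc]

theorem ball_infDist_frontier_subset {E : Type*} [NormedAddCommGroup E] [NormedSpace ℝ E]
    [FiniteDimensional ℝ E] {Ω : Set E} (hne : Ω ≠ univ) {x : E} (hx : x ∈ Ω) :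
    ball x (infDist x (frontier Ω)) ⊆ Ω := by
  obtain ⟨y, hy, hxy⟩ := exists_mem_frontier_infDist_compl_eq_dist hx hne
  exact (ball_subset_ball ((infDist_le_dist_of_mem hy).trans hxy.ge)).trans
    ball_infDist_compl_subset

variable {E : Type*} [NormedAddCommGroup E] [InnerProductSpace ℝ E] [FiniteDimensional ℝ E]
  {p : ℝ} {u : E → ℝ} {Ω : Set E}

theorem IsLaneEmdenSolution.rpow_smul_comp_add_smul (hu : IsLaneEmdenSolution p u Ω)
    (hΩ : IsOpen Ω) (hp : 1 < p) (x : E) {ρ : ℝ} (hρ : 0 < ρ) :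
    IsLaneEmdenSolution p (ρ ^ (2 / (p - 1)) • fun y => u (x + ρ • y))
      ((fun y => x + ρ • y) ⁻¹' Ω) where
  contDiffOn := contDiffOn_const.smul (hu.contDiffOn.comp (by fun_prop) (mapsTo_preimage _ _))
  nonneg y hy := mul_nonneg (Real.rpow_nonneg hρ.le _) (hu.nonneg _ hy)
  neg_laplacian_eq y hy := by
    have hu₂ : ContDiffAt ℝ 2 u (x + ρ • y) := hu.contDiffAt hΩ hy 2
    have hpow : (ρ ^ (2 / (p - 1))) ^ p = ρ ^ (2 / (p - 1)) * ρ ^ 2 := by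
      have := (sub_pos.2 hp).ne'
      rw [← Real.rpow_mul hρ.le, ← Real.rpow_two, ← Real.rpow_add hρ]
      congr 1
      field_simp
      ring
    have hΔ := laplacian_comp_add_smul_linearIsometryEquiv (LinearIsometryEquiv.refl ℝ E) x ρ hu₂
    simp only [LinearIsometryEquiv.coe_refl, id_eq] at hΔ
    have hcomp : ContDiffAt ℝ 2 (fun y => u (x + ρ • y)) y := hu₂.comp y (by fun_prop)
    rw [InnerProductSpace.laplacian_smul _ hcomp, hΔ, Pi.smul_apply,
      smul_eq_mul, smul_eq_mul, smul_eq_mul,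
      Real.mul_rpow (Real.rpow_nonneg hρ.le _) (hu.nonneg _ hy), hpow, ← hu.neg_laplacian_eq _ hy]
    ring

theorem rpow_div_le_mul_inv {p B ρ D : ℝ} (hp : 1 < p) (hρ : 0 < ρ) (hD : 0 ≤ D)
    {r : ℕ} (h : ρ ^ (2 / (p - 1) + r) * D ≤ B) :
    D ^ ((p - 1) / ((p - 1) * r + 2)) ≤ B ^ ((p - 1) / ((p - 1) * r + 2)) * ρ⁻¹ := by
  have hp' : 0 < p - 1 := sub_pos.2 hp
  set θ := (p - 1) / ((p - 1) * r + 2) with hθ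
  have hθ_mul : (2 / (p - 1) + r) * θ = 1 := by
    rw [hθ]
    field_simp
    ring
  rw [← div_eq_mul_inv, le_div_iff₀ hρ]
  calc D ^ θ * ρ = (ρ ^ (2 / (p - 1) + r) * D) ^ θ := by
        rw [Real.mul_rpow (by positivity) hD, ← Real.rpow_mul hρ.le, hθ_mul, Real.rpow_one,
          mul_comm]
    _ ≤ B ^ θ := Real.rpow_le_rpow (by positivity) h (by positivity)

end Scaling

theorem higher_order_derivative_estimate_general {E : Type*} [NormedAddCommGroup E]
    [InnerProductSpace ℝ E] [FiniteDimensional ℝ E] (hn : 1 ≤ Module.finrank ℝ E) {p : ℝ}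
    (hp : 1 < p) (hsub : ((Module.finrank ℝ E : ℝ) - 2) * p < Module.finrank ℝ E + 2) (s : ℕ) :
    ∃ C : ℝ, 0 < C ∧ ∀ (u : E → ℝ) (Ω : Set E), IsLaneEmdenSolution p u Ω → IsOpen Ω →
      Ω ≠ univ → ∀ x ∈ Ω,
        ∑ r ∈ Finset.range (s + 1), ‖iteratedFDeriv ℝ r u x‖ ^ ((p - 1) / ((p - 1) * r + 2))
          ≤ C * (infDist x (frontier Ω))⁻¹ := by
  obtain ⟨B, hB⟩ := exists_norm_iteratedFDeriv_le_of_closedBall_subset (E := E) hn hp hsub s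
  set C := ∑ r ∈ Finset.range (s + 1), (max B 1) ^ ((p - 1) / ((p - 1) * r + 2))
  refine ⟨C * (s + 3), ?_, fun u Ω hu hΩ hne x hx => ?_⟩
  · exact mul_pos (Finset.sum_pos (fun r _ => by positivity) ⟨0, by simp⟩) (by positivity)
  have hd : 0 < infDist x (frontier Ω) :=
    (isClosed_frontier.notMem_iff_infDist_pos (nonempty_frontier_iff.2 ⟨⟨x, hx⟩, hne⟩)).1
      fun h => (hΩ.frontier_eq ▸ h).2 hx
  set ρ := infDist x (frontier Ω) / (s + 3) with hρ_def
  have hρ : 0 < ρ := by positivity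
  have hball : closedBall 0 (s + 2) ⊆ (fun y => x + ρ • y) ⁻¹' Ω := fun y hy => by
    refine ball_infDist_frontier_subset hne hx ?_
    rw [mem_ball, dist_self_add_left, norm_smul, Real.norm_of_nonneg hρ.le, hρ_def,
      div_mul_eq_mul_div, div_lt_iff₀ (by positivity)]
    gcongr
    linarith [mem_closedBall_zero_iff.1 hy]
  rw [mul_assoc, ← div_eq_mul_inv, ← inv_div, ← hρ_def, Finset.sum_mul]
  refine Finset.sum_le_sum fun r hr => rpow_div_le_mul_inv hp hρ (norm_nonneg _) ?_
  rw [← norm_iteratedFDeriv_rpow_smul_comp_add_smul hρ (hu.contDiffAt hΩ hx r)]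
  exact (hB _ _ 0 (hu.rpow_smul_comp_add_smul hΩ hp x hρ) (hΩ.preimage (by fun_prop)) hball r
    (Finset.mem_range_succ_iff.1 hr)).trans (le_max_left B 1)

theorem laplacian_eq_innerProductSpace_laplacian {N : ℕ} (u : EuclideanSpace ℝ (Fin N) → ℝ)
    (x : EuclideanSpace ℝ (Fin N)) : laplacian u x = Δ u x := by
  rw [InnerProductSpace.laplacian_eq_iteratedFDeriv_orthonormalBasis u
    (EuclideanSpace.basisFun (Fin N) ℝ)]
  simp only [laplacian, EuclideanSpace.basisFun_apply]

/-- **Theorem 2.4.** Let `N ≥ 2`, `1 < λ < λ_s` (with `λ_s = (N+2)/(N-2)` if `N > 2`,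
`λ_s = ∞` if `N = 2`), and let `Ω ≠ ℝ^N` be a domain in `ℝ^N`. Then for every
nonnegative integer `s` there is `C = C(N, λ, s) > 0` (independent of `Ω` and `u`)
such that any nonnegative smooth solution `u` of `-Δu = u^λ` on `Ω` satisfies
`∑_{r=0}^{s} |∇^r u(x)|^{(λ-1)/((λ-1)r+2)} ≤ C ⬝ dist(x, ∂Ω)⁻¹` for all `x ∈ Ω`. -/
theorem higher_order_derivative_estimate
    (N : ℕ) (hN : 2 ≤ N) (lam : ℝ)
    (hlam₁ : 1 < lam)
    (hlam₂ : (N : ℝ) > 2 → lam < ((N : ℝ) + 2) / ((N : ℝ) - 2))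
    (s : ℕ) :
    ∃ C : ℝ, 0 < C ∧
      ∀ Ω : Set (EuclideanSpace ℝ (Fin N)),
        IsOpen Ω → IsConnected Ω → Ω ≠ Set.univ →
        ∀ u : EuclideanSpace ℝ (Fin N) → ℝ, ContDiffOn ℝ (⊤ : ℕ∞) u Ω →
          (∀ x ∈ Ω, 0 ≤ u x) →
          (∀ x ∈ Ω, -laplacian u x = u x ^ lam) →
          ∀ x ∈ Ω,
            ∑ r ∈ Finset.range (s + 1),
                ‖iteratedFDeriv ℝ r u x‖ ^ ((lam - 1) / ((lam - 1) * r + 2)) ≤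
              C * (infDist x (frontier Ω))⁻¹ := by
  have hN' : (2 : ℝ) ≤ N := by exact_mod_cast hN
  have hsub : ((N : ℝ) - 2) * lam < N + 2 := by
    rcases hN'.eq_or_lt with h | h
    · rw [← h]; norm_num
    · have := hlam₂ h
      rwa [lt_div_iff₀ (by linarith), mul_comm] at this
  obtain ⟨C, hC₀, hC⟩ := higher_order_derivative_estimate_general
    (E := EuclideanSpace ℝ (Fin N)) (by rw [finrank_euclideanSpace_fin]; lia) hlam₁
    (by rwa [finrank_euclideanSpace_fin]) s
  refine ⟨C, hC₀, fun Ω hΩ _ hne u hu hnonneg heq => hC u Ω ⟨hu, hnonneg, fun y hy => ?_⟩ hΩ hne⟩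
  rw [← heq y hy, laplacian_eq_innerProductSpace_laplacian]
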